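/- Let S be a special schema and let u be a variable. Then for every labelled function symbol f^(l) ∈ Need_S(u), at least one of the following holds: (a) there is a Herbrand interpretation i with M[S]^i_e ≠ ⊥ such that the function symbol f occurs in the term M[S]^i_e(u); or (b) there exist a predicate symbol p with a labelled occurrence in Need_S(u) and a vector term t⃗ containing an occurrence of f such that there is a p(t⃗)u-couple for S. -/

import Mathlib

/-!
Call a predicate symbol `q` *relevant* (`Rel`) if flipping the truth value of one predicate term of
`q` in an interpretation with finitely many true predicate terms can change the final value of `u`;
freeness makes all executions under such interpretations terminate. Call a labelled assignment
*live* (`Live`) if the value it produces can enter the final value of `u` or an argument of a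
relevant needed predicate. The proof shows, by induction on `Need`, that every needed predicate
symbol is relevant and every needed labelled function symbol is live (`Need.live_or_rel`); the
required witness is then read off a live assignment (`Live.witness`), because the tails of a
couple for a relevant predicate can be attached to every path that reaches this predicate
(`tails_couple`). That attachment rests on liberality: equalities between terms computed after a
common head do not depend on the head (`exchange`).

Data dependence steps of the induction amount to splicing paths at a common labelled symbol. The
control steps are the core.

* A predicate controlled by an irrelevant predicate is irrelevant (`Idle.not_rel`, from
  `not_rel_child`).
* Two heads that lead to the same continuation and make the same relevant decisions (`Twin`) yield
  the same arguments for all relevant predicates met afterwards (`Twin.args_eq`) and the same final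
  value of `u` (`Twin.value_eq`).
* If an irrelevant predicate controlled a live assignment, then executing the part with this
  assignment and executing the other part (for a while-schema: not entering the body) would give
  twins. By liberality and the condition on the two parts of an if-schema these differ at a
  variable whose value still matters, a contradiction (`Live.rel_of_controls`).

The first two items are proved by minimality, counting the true relevant predicate terms of a
couple. The decisive contradiction is `no_loop`: by freeness no path meets a predicate twice when
the first of these two decisions and all decisions in between are false.

Paths are handled through a small-step machine (`Step`, `Run`) whose control state is the list of
schemas still to be executed; `Run [S] w []` says that `w` is a complete path of `S`
(`mem_paths_iff`).
-/

/-!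
Common formalization of program schemas (Danicic–Hierons–Laurence):
letters/paths, Herbrand semantics, freeness, liberality, subschemas,
data/control dependence, Weiser's set `Need`, slices and couples.
Function symbols, predicate symbols, variables and labels are all
modelled by `ℕ` (function and predicate symbols kept disjoint by
construction of the syntax).
-/

namespace SchemaSlicing

/-- Letters of the alphabet Λ(S): assignment letters `y := f^(l)(args)` and
predicate letters `⟨p^(l)(args), b⟩`. -/
inductive Letter : Type
  | asn (y : ℕ) (f : ℕ) (l : ℕ) (args : List ℕ)
  | prd (p : ℕ) (l : ℕ) (args : List ℕ) (b : Bool)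
  deriving DecidableEq

/-- Program schemas. -/
inductive Schema : Type
  | skip
  | assign (y : ℕ) (f : ℕ) (l : ℕ) (args : List ℕ)
  | seq (S₁ S₂ : Schema)
  | ite (p : ℕ) (l : ℕ) (args : List ℕ) (Tt Tf : Schema)
  | whil (p : ℕ) (l : ℕ) (args : List ℕ) (body : Schema)

/-- Complete paths of a while loop iterated `n` times. -/
def whileIter (p l : ℕ) (args : List ℕ) (B : Set (List Letter)) : ℕ → Set (List Letter)
  | 0 => {[Letter.prd p l args false]}
  | n + 1 => {σ | ∃ x ∈ B, ∃ y ∈ whileIter p l args B n, σ = Letter.prd p l args true :: (x ++ y)}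

/-- The set Π(S) of complete paths through a schema. -/
def Paths : Schema → Set (List Letter)
  | .skip => {[]}
  | .assign y f l args => {[Letter.asn y f l args]}
  | .seq S₁ S₂ => {σ | ∃ x ∈ Paths S₁, ∃ y ∈ Paths S₂, σ = x ++ y}
  | .ite p l args Tt Tf =>
      {σ | (∃ x ∈ Paths Tt, σ = Letter.prd p l args true :: x) ∨
           (∃ x ∈ Paths Tf, σ = Letter.prd p l args false :: x)}
  | .whil p l args body => {σ | ∃ n, σ ∈ whileIter p l args (Paths body) n}

/-- pre(Π(S)): finite prefixes of complete paths. -/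
def PrePaths (S : Schema) : Set (List Letter) := {σ | ∃ τ, σ <+: τ ∧ τ ∈ Paths S}

/-- μ is a path-segment of S. -/
def PathSegment (S : Schema) (μ : List Letter) : Prop := ∃ a b, a ++ μ ++ b ∈ Paths S

/-- μ is a terminal path-segment of S. -/
def TerminalSegment (S : Schema) (μ : List Letter) : Prop := ∃ a, a ++ μ ∈ Paths S

/-- An interpretation over a domain `D`. -/
structure Interp (D : Type) where
  fn : ℕ → List D → D
  pr : ℕ → List D → Bool

/-- One execution step on states. -/
def stepL {D : Type} (I : Interp D) (d : ℕ → D) : Letter → (ℕ → D)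
  | .asn y f _ args => Function.update d y (I.fn f (args.map d))
  | .prd _ _ _ _ => d

/-- `M[σ]^I_d`: the state after executing the assignment letters of σ from d. -/
def execP {D : Type} (I : Interp D) (d : ℕ → D) (σ : List Letter) : ℕ → D :=
  σ.foldl (stepL I) d

/-- σ is consistent with the interpretation `I` from initial state `d`:
every predicate letter along σ is evaluated according to `I`. -/
def Agrees {D : Type} (I : Interp D) (d : ℕ → D) (σ : List Letter) : Prop :=
  ∀ τ p l args b, τ ++ [Letter.prd p l args b] <+: σ →
    I.pr p (args.map (execP I d τ)) = b

/-- σ is the (terminating) path `π_S(I,d)`. -/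
def TermRun {D : Type} (S : Schema) (I : Interp D) (d : ℕ → D) (σ : List Letter) : Prop :=
  σ ∈ Paths S ∧ Agrees I d σ

/-- `M[S]^I_d ≠ ⊥`. -/
def Terminates {D : Type} (S : Schema) (I : Interp D) (d : ℕ → D) : Prop :=
  ∃ σ, TermRun S I d σ

/-- Terms over function symbols and variables (the Herbrand domain). -/
inductive Trm : Type
  | var : ℕ → Trm
  | app : ℕ → List Trm → Trm

/-- A Herbrand interpretation is determined by its predicate part. -/
abbrev HInterp := ℕ → List Trm → Bool

/-- The Herbrand interpretation with predicate part `h`. -/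
def herb (h : HInterp) : Interp Trm := ⟨Trm.app, h⟩

/-- The natural state `e`. -/
def eSt : ℕ → Trm := Trm.var

/-- `M[σ]_e`: Herbrand execution of the assignment letters of σ from e. -/
def hexec (σ : List Letter) : ℕ → Trm := execP (herb fun _ _ => false) eSt σ

/-- σ is consistent with the Herbrand interpretation `i` from `e`. -/
def hAgrees (i : HInterp) (σ : List Letter) : Prop := Agrees (herb i) eSt σ

/-- A schema is free if every prefix of a complete path is a prefix of
`π_S(i,e)` for some Herbrand interpretation i. -/
def Free (S : Schema) : Prop := ∀ σ ∈ PrePaths S, ∃ i : HInterp, hAgrees i σ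

/-- A schema is liberal if along any executable path (from `e`, under a
Herbrand interpretation) no two assignments produce the same term. -/
def Liberal (S : Schema) : Prop :=
  ∀ (i : HInterp) (μ ν : List Letter) (y f l args w g m brgs),
    (μ ++ Letter.asn y f l args :: (ν ++ [Letter.asn w g m brgs])) ∈ PrePaths S →
    hAgrees i (μ ++ Letter.asn y f l args :: (ν ++ [Letter.asn w g m brgs])) →
    hexec (μ ++ [Letter.asn y f l args]) y ≠
      hexec (μ ++ Letter.asn y f l args :: (ν ++ [Letter.asn w g m brgs])) w

/-- Labelled symbols: labelled function symbols and labelled predicate symbols. -/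
inductive LSym : Type
  | fn (f l : ℕ)
  | pr (p l : ℕ)
  deriving DecidableEq

/-- The set of labelled symbols occurring in a schema. -/
def lsymSet : Schema → Set LSym
  | .skip => ∅
  | .assign _ f l _ => {LSym.fn f l}
  | .seq a b => lsymSet a ∪ lsymSet b
  | .ite p l _ t e => insert (LSym.pr p l) (lsymSet t ∪ lsymSet e)
  | .whil p l _ b => insert (LSym.pr p l) (lsymSet b)

/-- Number of occurrences of a labelled symbol in a schema. -/
def lsymCount : Schema → LSym → ℕ
  | .skip, _ => 0
  | .assign _ f l _, x => if x = LSym.fn f l then 1 else 0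
  | .seq a b, x => lsymCount a x + lsymCount b x
  | .ite p l _ t e, x => (if x = LSym.pr p l then 1 else 0) + lsymCount t x + lsymCount e x
  | .whil p l _ b, x => (if x = LSym.pr p l then 1 else 0) + lsymCount b x

/-- Standing convention: distinct occurrences of the same symbol carry distinct labels. -/
def WellLabelled (S : Schema) : Prop := ∀ x, lsymCount S x ≤ 1

/-- Number of occurrences of a predicate symbol in a schema. -/
def predCount : Schema → ℕ → ℕ
  | .skip, _ => 0
  | .assign _ _ _ _, _ => 0
  | .seq a b, p => predCount a p + predCount b p
  | .ite q _ _ t e, p => (if q = p then 1 else 0) + predCount t p + predCount e p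
  | .whil q _ _ b, p => (if q = p then 1 else 0) + predCount b p

/-- No predicate symbol occurs more than once. -/
def PredLinear (S : Schema) : Prop := ∀ p, predCount S p ≤ 1

/-- `Occurs T S`: T occurs as a subtree (statement) of S. -/
inductive Occurs : Schema → Schema → Prop
  | refl (S : Schema) : Occurs S S
  | seqL {S T U : Schema} : Occurs S T → Occurs S (.seq T U)
  | seqR {S T U : Schema} : Occurs S U → Occurs S (.seq T U)
  | iteT {S t e : Schema} {p l args} : Occurs S t → Occurs S (.ite p l args t e)
  | iteF {S t e : Schema} {p l args} : Occurs S e → Occurs S (.ite p l args t e)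
  | whilB {S b : Schema} {p l args} : Occurs S b → Occurs S (.whil p l args b)

/-- The schema contains an assignment to the variable v. -/
def AssignsTo : Schema → ℕ → Prop
  | .skip, _ => False
  | .assign y _ _ _, v => y = v
  | .seq a b, v => AssignsTo a v ∨ AssignsTo b v
  | .ite _ _ _ t e, v => AssignsTo t v ∨ AssignsTo e v
  | .whil _ _ _ b, v => AssignsTo b v

/-- The schema contains an assignment `v := f(...)`. -/
def AssignsWith : Schema → ℕ → ℕ → Prop
  | .skip, _, _ => False
  | .assign y g _ _, f, v => g = f ∧ y = v
  | .seq a b, f, v => AssignsWith a f v ∨ AssignsWith b f v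
  | .ite _ _ _ t e, f, v => AssignsWith t f v ∨ AssignsWith e f v
  | .whil _ _ _ b, f, v => AssignsWith b f v

/-- If a function symbol occurs in assignments in both parts of an if
predicate, then those assignments assign to distinct variables. -/
def IfPartsCondition (S : Schema) : Prop :=
  ∀ p l args t e, Occurs (Schema.ite p l args t e) S →
    ∀ f v, AssignsWith t f v → AssignsWith e f v → False

/-- Special schemas: (well-labelled,) predicate-linear, free, liberal,
satisfying the condition on the two parts of each if predicate. -/
def Special (S : Schema) : Prop :=
  WellLabelled S ∧ PredLinear S ∧ Free S ∧ Liberal S ∧ IfPartsCondition S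

/-- `Subschema T S`: T is obtained from S by deleting statements. -/
inductive Subschema : Schema → Schema → Prop
  | skip (S : Schema) : Subschema .skip S
  | refl (S : Schema) : Subschema S S
  | seqL (S₁ S₂ : Schema) : Subschema S₁ (.seq S₁ S₂)
  | seqR (S₁ S₂ : Schema) : Subschema S₂ (.seq S₁ S₂)
  | seqCongrL {S' S : Schema} (T : Schema) :
      Subschema S' S → Subschema (.seq S' T) (.seq S T)
  | seqCongrR {T' T : Schema} (S : Schema) :
      Subschema T' T → Subschema (.seq S T') (.seq S T)
  | whilCongr {T' T : Schema} (p l : ℕ) (args : List ℕ) :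
      Subschema T' T → Subschema (.whil p l args T') (.whil p l args T)
  | iteCongrT {T' T : Schema} (p l : ℕ) (args : List ℕ) (E : Schema) :
      Subschema T' T → Subschema (.ite p l args T' E) (.ite p l args T E)
  | iteCongrF {E' E : Schema} (p l : ℕ) (args : List ℕ) (T : Schema) :
      Subschema E' E → Subschema (.ite p l args T E') (.ite p l args T E)
  | trans {A B C : Schema} : Subschema A B → Subschema B C → Subschema A C

/-- T is a u-slice of S (u a variable): over every domain, state and
interpretation, if S terminates then T terminates with the same final value of u. -/
def IsUSlice (S T : Schema) (u : ℕ) : Prop :=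
  ∀ (D : Type) (I : Interp D) (d : ℕ → D),
    Terminates S I d →
      Terminates T I d ∧
      ∀ σ τ, TermRun S I d σ → TermRun T I d τ → execP I d σ u = execP I d τ u

/-- T is an ω-slice of S: S and T have the same termination behaviour. -/
def IsOmegaSlice (S T : Schema) : Prop :=
  ∀ (D : Type) (I : Interp D) (d : ℕ → D), Terminates S I d ↔ Terminates T I d

/-- `IsFTrm F t`: t is an F-term, for a (nonempty) word F of function symbols. -/
inductive IsFTrm : List ℕ → Trm → Prop
  | base (f : ℕ) (ts : List Trm) : IsFTrm [f] (.app f ts)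
  | step {F : List ℕ} {t : Trm} (g : ℕ) {ts : List Trm} :
      t ∈ ts → IsFTrm F t → IsFTrm (F ++ [g]) (.app g ts)

/-- `IsVFTrm v F t`: t is a vF-term. -/
inductive IsVFTrm (v : ℕ) : List ℕ → Trm → Prop
  | base : IsVFTrm v [] (.var v)
  | step {F : List ℕ} {t : Trm} (g : ℕ) {ts : List Trm} :
      t ∈ ts → IsVFTrm v F t → IsVFTrm v (F ++ [g]) (.app g ts)

/-- The function symbol f occurs in the term t. -/
inductive OccIn (f : ℕ) : Trm → Prop
  | here (ts : List Trm) : OccIn f (.app f ts)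
  | there {g : ℕ} {ts : List Trm} {t : Trm} : t ∈ ts → OccIn f t → OccIn f (.app g ts)

/-- Labelled terms: applications additionally record the label of the
assignment that created them. -/
inductive LTrm : Type
  | var : ℕ → LTrm
  | app : ℕ → ℕ → List LTrm → LTrm

def lStep (d : ℕ → LTrm) : Letter → (ℕ → LTrm)
  | .asn y f l args => Function.update d y (LTrm.app f l (args.map d))
  | .prd _ _ _ _ => d

/-- Labelled Herbrand execution from e. -/
def lexec (σ : List Letter) : ℕ → LTrm := σ.foldl lStep LTrm.var

/-- F-terms for words F of labelled function symbols. -/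
inductive IsFLTrm : List (ℕ × ℕ) → LTrm → Prop
  | base (f l : ℕ) (ts : List LTrm) : IsFLTrm [(f, l)] (.app f l ts)
  | step {F : List (ℕ × ℕ)} {t : LTrm} (g m : ℕ) {ts : List LTrm} :
      t ∈ ts → IsFLTrm F t → IsFLTrm (F ++ [(g, m)]) (.app g m ts)

/-- `f^(l) ⤳ u` for a variable u. -/
def DepFV (S : Schema) (fl : ℕ × ℕ) (u : ℕ) : Prop :=
  ∃ σ, TerminalSegment S σ ∧ IsFLTrm [fl] (lexec σ u)

/-- `f^(l) ⤳ g^(m)` for labelled function symbols. -/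
def DepFF (S : Schema) (fl gm : ℕ × ℕ) : Prop :=
  ∃ σ, PathSegment S σ ∧ ∃ w, IsFLTrm [fl, gm] (lexec σ w)

/-- `f^(l) ⤳ q^(m)` for a labelled predicate. -/
def DepFP (S : Schema) (fl : ℕ × ℕ) (q m : ℕ) : Prop :=
  ∃ σ args Z, PathSegment S (σ ++ [Letter.prd q m args Z]) ∧
    ∃ w ∈ args, IsFLTrm [fl] (lexec σ w)

/-- `f^(l) ⤳ x` for a labelled symbol x. -/
def DepFX (S : Schema) (fl : ℕ × ℕ) : LSym → Prop
  | .fn g m => DepFF S fl (g, m)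
  | .pr q m => DepFP S fl q m

/-- The labelled predicate `p^(l)` controls the labelled symbol x in S. -/
def ControlsL (S : Schema) (p l : ℕ) (x : LSym) : Prop :=
  (∃ args t e, Occurs (Schema.ite p l args t e) S ∧ (x ∈ lsymSet t ∨ x ∈ lsymSet e)) ∨
  (∃ args b, Occurs (Schema.whil p l args b) S ∧ x ∈ lsymSet b)

/-- `p^(l)` is a while predicate of S. -/
def IsWhilePred (S : Schema) (p l : ℕ) : Prop :=
  ∃ args b, Occurs (Schema.whil p l args b) S

/-- Slicing criteria: a variable, or termination (ω). -/
inductive Crit : Type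
  | var : ℕ → Crit
  | omega

/-- Weiser's labelled symbol set `Need_S(u)`. -/
inductive Need (S : Schema) : Crit → LSym → Prop
  | ofVar {v f l : ℕ} : DepFV S (f, l) v → Need S (.var v) (.fn f l)
  | ofOmega {p l : ℕ} : IsWhilePred S p l → Need S .omega (.pr p l)
  | ofDep {u : Crit} {f l : ℕ} {x : LSym} :
      Need S u x → DepFX S (f, l) x → Need S u (.fn f l)
  | ofControl {u : Crit} {p l : ℕ} {x : LSym} :
      Need S u x → ControlsL S p l x → Need S u (.pr p l)

/-- `{i,j}` is a p(ts)-couple: i and j differ at the predicate term p(ts)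
and agree on every other predicate term. -/
def PTCouple (p : ℕ) (ts : List Trm) (i j : HInterp) : Prop :=
  i p ts ≠ j p ts ∧ ∀ q ss, (q, ss) ≠ (p, ts) → i q ss = j q ss

/-- `{i,j}` is a p(ts)u-couple for S. -/
def PTUCouple (S : Schema) (p : ℕ) (ts : List Trm) (u : ℕ) (i j : HInterp) : Prop :=
  PTCouple p ts i j ∧
  ∃ σ τ, TermRun S (herb i) eSt σ ∧ TermRun S (herb j) eSt τ ∧ hexec σ u ≠ hexec τ u

/-- `{i,j}` is a pu-couple for S. -/
def PUCouple (S : Schema) (p u : ℕ) (i j : HInterp) : Prop :=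
  ∃ ts, PTUCouple S p ts u i j

/-- `{i,j}` is a pω-couple for S: a p-couple such that exactly one of the
two runs terminates. -/
def POmegaCouple (S : Schema) (p : ℕ) (i j : HInterp) : Prop :=
  ∃ ts, PTCouple p ts i j ∧
    Xor' (Terminates S (herb i) eSt) (Terminates S (herb j) eSt)

/-- A `p^(l)u`-couple for S presented with its divergence data: the common
prefix `head` (the head of the couple), the argument vector of `p^(l)` at the
divergence point, and the two tails. -/
def LPUCoupleData (S : Schema) (p l u : ℕ) (i j : HInterp)
    (head : List Letter) (args : List ℕ) (ρt ρf : List Letter) : Prop :=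
  PTCouple p (args.map (hexec head)) i j ∧
  TermRun S (herb i) eSt (head ++ Letter.prd p l args true :: ρt) ∧
  TermRun S (herb j) eSt (head ++ Letter.prd p l args false :: ρf) ∧
  hexec (head ++ Letter.prd p l args true :: ρt) u ≠
    hexec (head ++ Letter.prd p l args false :: ρf) u

/-- A (p,X)-link in S. -/
def PLink (S : Schema) (p : ℕ) (X : Bool) (ν : List Letter) : Prop :=
  (∃ l args t e, Occurs (Schema.ite p l args t e) S ∧
     ∃ π ∈ Paths (if X then t else e), ν = Letter.prd p l args X :: π) ∨
  (∃ l args b, Occurs (Schema.whil p l args b) S ∧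
     ((X = false ∧ ν = [Letter.prd p l args false]) ∨
      (X = true ∧ ∃ π ∈ Paths b, ∃ ρ ∈ Paths (Schema.whil p l args b),
        ν = Letter.prd p l args true :: (π ++ ρ))))

/-- The path-segment μ v-feeds p to q in S. -/
def VFeeds (S : Schema) (v p q : ℕ) (μ : List Letter) : Prop :=
  ∃ X ν, PLink S p X ν ∧ ∃ m args, PathSegment S (ν ++ μ ++ [Letter.prd q m args true]) ∧
    ∃ w ∈ args, ∃ F, IsVFTrm v F (hexec μ w)

/-- There is an assignment to v in the body (while) or in the true or
false part (if) of the predicate p in S. -/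
def AssignInPart (S : Schema) (p v : ℕ) : Prop :=
  (∃ l args t e, Occurs (Schema.ite p l args t e) S ∧ (AssignsTo t v ∨ AssignsTo e v)) ∨
  (∃ l args b, Occurs (Schema.whil p l args b) S ∧ AssignsTo b v)

/-- The (unlabelled) symbol of a letter (function symbols and predicate
symbols kept disjoint via a sum). -/
def symOf : Letter → Sum ℕ ℕ
  | .asn _ f _ _ => .inl f
  | .prd p _ _ _ => .inr p

/-- The labelled symbol of a letter. -/
def lsymOf : Letter → LSym
  | .asn _ f l _ => .fn f l
  | .prd p l _ _ => .pr p l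

/-- The vector of variables referenced by a letter. -/
def refsOf : Letter → List ℕ
  | .asn _ _ _ args => args
  | .prd _ _ args _ => args

/-- Statements of predicate-free schemas. -/
inductive PFStmt : Type
  | skip
  | asn (y : ℕ) (f : ℕ) (args : List ℕ)
  deriving DecidableEq

/-- A predicate-free schema is a finite sequence of skips and assignments. -/
abbrev PFS := List PFStmt

def pfStep (d : ℕ → Trm) : PFStmt → (ℕ → Trm)
  | .skip => d
  | .asn y f args => Function.update d y (Trm.app f (args.map d))

/-- Execution of a predicate-free schema from a state d. -/
def pfExecFrom (d : ℕ → Trm) (U : PFS) : ℕ → Trm := U.foldl pfStep d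

/-- `M[U]_e` for a predicate-free schema. -/
def pfExec (U : PFS) : ℕ → Trm := pfExecFrom eSt U

/-- A predicate-free schema is liberal: executed from e, no two of its
assignments produce equal term values. -/
def PFLiberal (U : PFS) : Prop :=
  ∀ A y f args B w g brgs C,
    U = A ++ PFStmt.asn y f args :: (B ++ PFStmt.asn w g brgs :: C) →
    pfExec (A ++ [PFStmt.asn y f args]) y ≠
      pfExec (A ++ PFStmt.asn y f args :: (B ++ [PFStmt.asn w g brgs])) w

end SchemaSlicing

namespace SchemaSlicing

/-! ### Paths as runs of a continuation machine -/

/-- One step of the machine whose control state is the list of schemas still to be executed;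
the word in the middle is the letter that is read, or empty for an administrative step. -/
inductive Step : List Schema → List Letter → List Schema → Prop
  | skip (K : List Schema) : Step (.skip :: K) [] K
  | seq (a b : Schema) (K : List Schema) : Step (.seq a b :: K) [] (a :: b :: K)
  | asn (y f l : ℕ) (args : List ℕ) (K : List Schema) :
      Step (.assign y f l args :: K) [.asn y f l args] K
  | iteT (p l : ℕ) (args : List ℕ) (t e : Schema) (K : List Schema) :
      Step (.ite p l args t e :: K) [.prd p l args true] (t :: K)
  | iteF (p l : ℕ) (args : List ℕ) (t e : Schema) (K : List Schema) :
      Step (.ite p l args t e :: K) [.prd p l args false] (e :: K)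
  | whT (p l : ℕ) (args : List ℕ) (B : Schema) (K : List Schema) :
      Step (.whil p l args B :: K) [.prd p l args true] (B :: .whil p l args B :: K)
  | whF (p l : ℕ) (args : List ℕ) (B : Schema) (K : List Schema) :
      Step (.whil p l args B :: K) [.prd p l args false] K

/-- `Run K w K'`: the machine can read the word `w` while moving from the continuation `K` to
the continuation `K'`. -/
inductive Run : List Schema → List Letter → List Schema → Prop
  | nil (K : List Schema) : Run K [] K
  | step {K : List Schema} {v : List Letter} {K₁ : List Schema} {w : List Letter}
      {K₂ : List Schema} : Step K v K₁ → Run K₁ w K₂ → Run K (v ++ w) K₂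

theorem Step.run {K v K₁} (h : Step K v K₁) : Run K v K₁ := by
  simpa using Run.step h (.nil K₁)

theorem Step.word {K v K₁} (h : Step K v K₁) : v = [] ∨ ∃ c, v = [c] := by
  cases h <;> simp

theorem Step.det {K v K₁ v' K₂} (h : Step K v K₁) (h' : Step K v' K₂) :
    (v = v' ∧ K₁ = K₂) ∨
      ∃ p l a b, v = [Letter.prd p l a b] ∧ v' = [Letter.prd p l a !b] := by
  cases h <;> cases h' <;> simp

theorem Step.flip {K K' p l a b} (h : Step K [Letter.prd p l a b] K') (b' : Bool) :
    ∃ K'', Step K [Letter.prd p l a b'] K'' := by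
  cases h <;> cases b' <;> exact ⟨_, by constructor⟩

theorem Run.inv {K w K'} (h : Run K w K') :
    (w = [] ∧ K = K') ∨ ∃ v K₁ w', Step K v K₁ ∧ w = v ++ w' ∧ Run K₁ w' K' := by
  cases h with
  | nil => exact .inl ⟨rfl, rfl⟩
  | step h h' => exact .inr ⟨_, _, _, h, rfl, h'⟩

theorem Run.trans {K w K' w' K''} (h : Run K w K') (h' : Run K' w' K'') :
    Run K (w ++ w') K'' := by
  induction h with
  | nil => simpa using h'
  | step hs _ ih => rw [List.append_assoc]; exact .step hs (ih h')

theorem Run.split {K v K''} (h : Run K v K'') :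
    ∀ {w w'}, v = w ++ w' → ∃ K', Run K w K' ∧ Run K' w' K'' := by
  induction h with
  | nil K =>
    intro w w' e
    obtain ⟨rfl, rfl⟩ := List.append_eq_nil_iff.1 e.symm
    exact ⟨K, .nil K, .nil K⟩
  | @step K v K₁ z K₂ hs hr ih =>
    intro w w' e
    rcases hs.word with rfl | ⟨c, rfl⟩
    · obtain ⟨K', h1, h2⟩ := ih e
      exact ⟨K', .step hs h1, h2⟩
    · rcases w with _ | ⟨d, w⟩
      · rw [List.nil_append] at e
        rw [← e]
        exact ⟨K, .nil K, .step hs hr⟩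
      · rw [List.cons_append, List.cons_append] at e
        obtain ⟨rfl, e'⟩ := List.cons_eq_cons.1 e
        obtain ⟨K', h1, h2⟩ := ih e'
        exact ⟨K', .step hs h1, h2⟩

theorem Run.prefix {K w w' K''} (h : Run K (w ++ w') K'') : ∃ K', Run K w K' :=
  let ⟨K', h1, _⟩ := h.split rfl
  ⟨K', h1⟩

/-- Two runs from the same continuation can only part at a predicate. -/
theorem Run.diverge {K w K₁} (h : Run K w K₁) :
    ∀ {w' K₂}, Run K w' K₂ → w <+: w' ∨ w' <+: w ∨
      ∃ τ p l a b, τ ++ [Letter.prd p l a b] <+: w ∧ τ ++ [Letter.prd p l a !b] <+: w' := by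
  induction h with
  | nil => intro w' K₂ _; exact .inl List.nil_prefix
  | @step K v K₁ w K₂ hs hr ih =>
    intro w' K₂ h'
    rcases h'.inv with ⟨rfl, rfl⟩ | ⟨v', K₁', w', hs', rfl, hr'⟩
    · exact .inr (.inl List.nil_prefix)
    · rcases hs.det hs' with ⟨rfl, rfl⟩ | ⟨p, l, a, b, rfl, rfl⟩
      · rcases ih hr' with h | h | ⟨τ, p, l, a, b, h1, h2⟩
        · exact .inl ((List.prefix_append_right_inj v).2 h)
        · exact .inr (.inl ((List.prefix_append_right_inj v).2 h))
        · refine .inr (.inr ⟨v ++ τ, p, l, a, b, ?_, ?_⟩) <;> rw [List.append_assoc]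
          · exact (List.prefix_append_right_inj v).2 h1
          · exact (List.prefix_append_right_inj v).2 h2
      · exact .inr (.inr ⟨[], p, l, a, b, by simp, by simp⟩)

/-- The word read up to `K` determines what can still be read on the way to the empty
continuation. -/
theorem Run.residual {K₀ H K} (h : Run K₀ H K) :
    ∀ {β}, Run K₀ (H ++ β) [] → Run K β [] := by
  induction h with
  | nil => intro β h'; simpa using h'
  | @step K v K₁ w K₂ hs hr ih =>
    intro β h'
    rcases h'.inv with ⟨-, rfl⟩ | ⟨v', K₁', w', hs', e, hr'⟩
    · cases hs
    · rcases hs.det hs' with ⟨rfl, rfl⟩ | ⟨p, l, a, b, rfl, rfl⟩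
      · rw [List.append_assoc] at e
        rw [← List.append_cancel_left e] at hr'
        exact ih hr'
      · simp at e

/-- No predicate letter of the word has the value `true`. -/
def AllF (w : List Letter) : Prop := ∀ p l a, Letter.prd p l a true ∉ w

theorem AllF.nil : AllF [] := by simp [AllF]

theorem AllF.append {w w' : List Letter} (h : AllF w) (h' : AllF w') : AllF (w ++ w') := by
  intro p l a hm
  rcases List.mem_append.1 hm with hm | hm
  · exact h p l a hm
  · exact h' p l a hm

theorem AllF.cons_prd {w : List Letter} (h : AllF w) (p l : ℕ) (a : List ℕ) :
    AllF (Letter.prd p l a false :: w) := by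
  intro p' l' a' hm
  simp only [List.mem_cons, Letter.prd.injEq, Bool.true_eq_false, and_false, false_or] at hm
  exact h _ _ _ hm

/-- The letters occurring in a schema. -/
def lett : Schema → Set Letter
  | .skip => ∅
  | .assign y f l args => {.asn y f l args}
  | .seq a b => lett a ∪ lett b
  | .ite p l args t e => {c | ∃ Z, c = .prd p l args Z} ∪ (lett t ∪ lett e)
  | .whil p l args b => {c | ∃ Z, c = .prd p l args Z} ∪ lett b

theorem lsymOf_mem_of_lett (T : Schema) {c : Letter} : c ∈ lett T → lsymOf c ∈ lsymSet T := by
  induction T with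
  | skip => exact fun h => h.elim
  | assign => rintro rfl; rfl
  | seq a b iha ihb => exact Or.imp iha ihb
  | ite p l args t e iht ihe =>
    rintro (⟨Z, rfl⟩ | h | h)
    · exact .inl rfl
    · exact .inr (.inl (iht h))
    · exact .inr (.inr (ihe h))
  | whil p l args b ih =>
    rintro (⟨Z, rfl⟩ | h)
    · exact .inl rfl
    · exact .inr (ih h)

theorem assignsWith_of_lett (T : Schema) {y f l args} :
    Letter.asn y f l args ∈ lett T → AssignsWith T f y := by
  induction T with
  | skip => exact fun h => h.elim
  | assign =>
    intro h
    obtain ⟨rfl, rfl, -, -⟩ := Letter.asn.inj h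
    exact ⟨rfl, rfl⟩
  | seq a b iha ihb => exact Or.imp iha ihb
  | ite p l args t e iht ihe =>
    rintro (⟨Z, h⟩ | h | h)
    · cases h
    · exact .inl (iht h)
    · exact .inr (ihe h)
  | whil p l args b ih =>
    rintro (⟨Z, h⟩ | h)
    · cases h
    · exact ih h

/-- The letters occurring in a list of schemas. -/
def lettL (M : List Schema) : Set Letter := {c | ∃ T ∈ M, c ∈ lett T}

theorem exists_allF (T : Schema) :
    ∀ K, ∃ w, Run (T :: K) w K ∧ AllF w ∧ ∀ c ∈ w, c ∈ lett T := by
  induction T with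
  | skip => exact fun K => ⟨[], (Step.skip K).run, .nil, by simp⟩
  | assign y f l a =>
    exact fun K => ⟨_, (Step.asn y f l a K).run, by simp [AllF], by simp [lett]⟩
  | seq a b iha ihb =>
    intro K
    obtain ⟨w, h1, h2, h3⟩ := iha (b :: K)
    obtain ⟨w', h1', h2', h3'⟩ := ihb K
    refine ⟨w ++ w', (Run.step (.seq a b K) (h1.trans h1') :), h2.append h2', fun c hc => ?_⟩
    rcases List.mem_append.1 hc with hc | hc
    · exact Or.inl (h3 c hc)
    · exact Or.inr (h3' c hc)
  | ite p l a t e iht ihe =>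
    intro K
    obtain ⟨w, h1, h2, h3⟩ := ihe K
    refine ⟨_, .step (.iteF p l a t e K) h1, h2.cons_prd _ _ _, fun c hc => ?_⟩
    rcases List.mem_cons.1 hc with rfl | hc
    · exact .inl ⟨_, rfl⟩
    · exact Or.inr (Or.inr (h3 c hc))
  | whil p l a B ih =>
    refine fun K => ⟨_, (Step.whF p l a B K).run, by simp [AllF], fun c hc => ?_⟩
    obtain rfl := List.mem_singleton.1 hc
    exact .inl ⟨_, rfl⟩

theorem exists_allF_list (M K : List Schema) :
    ∃ w, Run (M ++ K) w K ∧ AllF w ∧ ∀ c ∈ w, c ∈ lettL M := by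
  induction M with
  | nil => exact ⟨[], .nil K, .nil, by simp⟩
  | cons T M ih =>
    obtain ⟨w, h1, h2, h3⟩ := exists_allF T (M ++ K)
    obtain ⟨w', h1', h2', h3'⟩ := ih
    refine ⟨w ++ w', h1.trans h1', h2.append h2', fun c hc => ?_⟩
    rcases List.mem_append.1 hc with hc | hc
    · exact ⟨T, List.mem_cons_self, h3 c hc⟩
    · obtain ⟨T', hT', hc'⟩ := h3' c hc
      exact ⟨T', List.mem_cons_of_mem _ hT', hc'⟩

theorem Run.complete {K w K'} (h : Run K w K') : ∃ w', Run K (w ++ w') [] := by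
  obtain ⟨w', h', -⟩ := exists_allF_list K' []
  exact ⟨w', h.trans (by simpa using h')⟩

theorem Run.rest {K₀ H K β K₂} (h : Run K₀ H K) (h' : Run K₀ (H ++ β) K₂) :
    ∃ K₃, Run K β K₃ := by
  obtain ⟨w', h''⟩ := h'.complete
  rw [List.append_assoc] at h''
  exact (h.residual h'').prefix

theorem run_of_mem_paths (T : Schema) : ∀ {w}, w ∈ Paths T → ∀ K, Run (T :: K) w K := by
  induction T with
  | skip => rintro w rfl K; exact (Step.skip K).run
  | assign y f l a => rintro w rfl K; exact (Step.asn y f l a K).run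
  | seq a b iha ihb =>
    rintro w ⟨x, hx, y, hy, rfl⟩ K
    exact (Run.step (.seq a b K) ((iha hx _).trans (ihb hy K)) :)
  | ite p l a t e iht ihe =>
    rintro w (⟨x, hx, rfl⟩ | ⟨x, hx, rfl⟩) K
    · exact .step (.iteT p l a t e K) (iht hx K)
    · exact .step (.iteF p l a t e K) (ihe hx K)
  | whil p l a B ih =>
    rintro w ⟨n, hn⟩ K
    induction n generalizing w with
    | zero => obtain rfl := hn; exact (Step.whF p l a B K).run
    | succ n ihn =>
      obtain ⟨x, hx, y, hy, rfl⟩ := hn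
      exact .step (.whT p l a B K) ((ih hx _).trans (ihn hy))

/-- Concatenations of complete paths through the schemas of a continuation. -/
def PathsL : List Schema → Set (List Letter)
  | [] => {[]}
  | T :: K => {w | ∃ x ∈ Paths T, ∃ y ∈ PathsL K, w = x ++ y}

theorem Run.mem_pathsL {K w K'} (h : Run K w K') (hK : K' = []) : w ∈ PathsL K := by
  induction h with
  | nil => subst hK; rfl
  | step hs _ ih =>
    have ih := ih hK
    cases hs with
    | skip K => exact ⟨[], rfl, _, ih, rfl⟩
    | seq a b K =>
      obtain ⟨x, hx, y, ⟨x', hx', y', hy', rfl⟩, rfl⟩ := ih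
      exact ⟨x ++ x', ⟨x, hx, x', hx', rfl⟩, y', hy', by simp⟩
    | asn => exact ⟨[_], rfl, _, ih, rfl⟩
    | iteT =>
      obtain ⟨x, hx, y, hy, rfl⟩ := ih
      exact ⟨_ :: x, .inl ⟨x, hx, rfl⟩, y, hy, rfl⟩
    | iteF =>
      obtain ⟨x, hx, y, hy, rfl⟩ := ih
      exact ⟨_ :: x, .inr ⟨x, hx, rfl⟩, y, hy, rfl⟩
    | whT =>
      obtain ⟨x, hx, y, ⟨x', ⟨n, hn⟩, y', hy', rfl⟩, rfl⟩ := ih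
      exact ⟨_ :: (x ++ x'), ⟨n + 1, x, hx, x', hn, rfl⟩, y', hy', by simp⟩
    | whF => exact ⟨[_], ⟨0, rfl⟩, _, ih, rfl⟩

theorem mem_paths_iff {S : Schema} {w : List Letter} : w ∈ Paths S ↔ Run [S] w [] := by
  refine ⟨fun h => run_of_mem_paths S h [], fun h => ?_⟩
  obtain ⟨x, hx, y, hy, rfl⟩ := h.mem_pathsL rfl
  obtain rfl : y = [] := hy
  simpa using hx

theorem mem_prePaths_iff {S : Schema} {w : List Letter} :
    w ∈ PrePaths S ↔ ∃ K, Run [S] w K := by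
  constructor
  · rintro ⟨τ, ⟨z, rfl⟩, h⟩
    exact (mem_paths_iff.1 h).prefix
  · rintro ⟨K, h⟩
    obtain ⟨w', h'⟩ := h.complete
    exact ⟨_, List.prefix_append w w', mem_paths_iff.2 h'⟩

/-- A run stops at a control state whose next step reads a prescribed letter. -/
theorem Run.at_letter {K w K₂} (h : Run K w K₂) : ∀ {w₁ c w₂}, w = w₁ ++ c :: w₂ →
    ∃ K₁ K₁', Run K w₁ K₁ ∧ Step K₁ [c] K₁' ∧ Run K₁' w₂ K₂ := by
  induction h with
  | nil => intro w₁ c w₂ e; simp at e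
  | @step K v K₁ z K₂ hs hr ih =>
    intro w₁ c w₂ e
    rcases hs.word with rfl | ⟨d, rfl⟩
    · obtain ⟨K₁, K₁', h1, h2, h3⟩ := ih e
      exact ⟨K₁, K₁', .step hs h1, h2, h3⟩
    · rcases w₁ with _ | ⟨d', w₁⟩
      · simp only [List.cons_append, List.nil_append, List.cons.injEq] at e
        obtain ⟨rfl, rfl⟩ := e
        exact ⟨K, K₁, .nil K, hs, hr⟩
      · simp only [List.cons_append, List.nil_append, List.cons.injEq] at e
        obtain ⟨rfl, e⟩ := e
        obtain ⟨K₁, K₁', h1, h2, h3⟩ := ih e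
        exact ⟨K₁, K₁', .step hs h1, h2, h3⟩

/-- A predicate letter can be flipped at the end of a run. -/
theorem Run.flip {K w K' p l a b} (h : Run K (w ++ [Letter.prd p l a b]) K') (b' : Bool) :
    ∃ K'', Run K (w ++ [Letter.prd p l a b']) K'' := by
  obtain ⟨K₁, K₁', h1, h2, -⟩ := h.at_letter rfl
  obtain ⟨K'', h3⟩ := h2.flip b'
  exact ⟨K'', h1.trans h3.run⟩

/-- While the machine stays above a bottom part `K` of the continuation, it only uses letters
of the part above it. -/
theorem Step.above {T M K v K₁} (h : Step (T :: (M ++ K)) v K₁) :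
    ∃ N, K₁ = N ++ K ∧ (∀ c ∈ v, c ∈ lettL (T :: M)) ∧ lettL N ⊆ lettL (T :: M) := by
  generalize hK : T :: (M ++ K) = K₀ at h
  cases h <;> obtain ⟨rfl, rfl⟩ := List.cons_eq_cons.1 hK
  · exact ⟨M, rfl, by simp, fun c ⟨T, hT, hc⟩ => ⟨T, List.mem_cons_of_mem _ hT, hc⟩⟩
  · refine ⟨_ :: _ :: M, rfl, by simp, fun c ⟨T, hT, hc⟩ => ?_⟩
    simp only [List.mem_cons] at hT
    rcases hT with rfl | rfl | hT
    · exact ⟨_, List.mem_cons_self, .inl hc⟩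
    · exact ⟨_, List.mem_cons_self, .inr hc⟩
    · exact ⟨T, List.mem_cons_of_mem _ hT, hc⟩
  · refine ⟨M, rfl, ?_, fun c ⟨T, hT, hc⟩ => ⟨T, List.mem_cons_of_mem _ hT, hc⟩⟩
    simp only [List.mem_singleton, forall_eq]
    exact ⟨_, List.mem_cons_self, rfl⟩
  · refine ⟨_ :: M, rfl, ?_, fun c ⟨T, hT, hc⟩ => ?_⟩
    · simp only [List.mem_singleton, forall_eq]
      exact ⟨_, List.mem_cons_self, .inl ⟨_, rfl⟩⟩
    · rcases List.mem_cons.1 hT with rfl | hT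
      · exact ⟨_, List.mem_cons_self, .inr (.inl hc)⟩
      · exact ⟨T, List.mem_cons_of_mem _ hT, hc⟩
  · refine ⟨_ :: M, rfl, ?_, fun c ⟨T, hT, hc⟩ => ?_⟩
    · simp only [List.mem_singleton, forall_eq]
      exact ⟨_, List.mem_cons_self, .inl ⟨_, rfl⟩⟩
    · rcases List.mem_cons.1 hT with rfl | hT
      · exact ⟨_, List.mem_cons_self, .inr (.inr hc)⟩
      · exact ⟨T, List.mem_cons_of_mem _ hT, hc⟩
  · refine ⟨_ :: _ :: M, rfl, ?_, fun c ⟨T, hT, hc⟩ => ?_⟩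
    · simp only [List.mem_singleton, forall_eq]
      exact ⟨_, List.mem_cons_self, .inl ⟨_, rfl⟩⟩
    · rcases List.mem_cons.1 hT with rfl | hT
      · exact ⟨_, List.mem_cons_self, .inr hc⟩
      · exact ⟨T, hT, hc⟩
  · refine ⟨M, rfl, ?_, fun c ⟨T, hT, hc⟩ => ⟨T, List.mem_cons_of_mem _ hT, hc⟩⟩
    simp only [List.mem_singleton, forall_eq]
    exact ⟨_, List.mem_cons_self, .inl ⟨_, rfl⟩⟩

/-- A run from `M ++ K` either passes through `K`, reading only letters of `M` before, or reads
only letters of `M`, and then its final continuation still has `K` at the bottom. -/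
theorem Run.split_cont {K₀ w K''} (h : Run K₀ w K'') : ∀ {M K}, K₀ = M ++ K →
    (∃ w₁ w₂, w = w₁ ++ w₂ ∧ Run (M ++ K) w₁ K ∧ Run K w₂ K'' ∧ ∀ c ∈ w₁, c ∈ lettL M) ∨
    (∃ N, K'' = N ++ K ∧ lettL N ⊆ lettL M ∧ ∀ c ∈ w, c ∈ lettL M) := by
  induction h with
  | nil => intro M K e; exact .inr ⟨M, e, subset_rfl, by simp⟩
  | @step K₀ v K₁ w K₂ hs hr ih =>
    intro M K e
    rcases M with _ | ⟨T, M⟩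
    · rw [List.nil_append] at e
      subst e
      exact .inl ⟨[], v ++ w, rfl, .nil _, .step hs hr, by simp⟩
    · subst e
      obtain ⟨N, rfl, hv, hN⟩ := hs.above
      rcases ih rfl with ⟨w₁, w₂, rfl, h1, h2, h3⟩ | ⟨N', rfl, hN', h3⟩
      · refine .inl ⟨v ++ w₁, w₂, by simp, .step hs h1, h2, fun c hc => ?_⟩
        exact (List.mem_append.1 hc).elim (hv c) fun h => hN (h3 c h)
      · refine .inr ⟨N', rfl, hN'.trans hN, fun c hc => ?_⟩
        exact (List.mem_append.1 hc).elim (hv c) fun h => hN (h3 c h)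

end SchemaSlicing

namespace SchemaSlicing

/-! ### Occurrences of statements and splicing of paths -/

/-- `Site S K P L`: the statement `P` occurs in `S`, and `L` is the continuation remaining after
this occurrence of `P` when `S` itself is executed with continuation `K`. -/
inductive Site : Schema → List Schema → Schema → List Schema → Prop
  | refl (S : Schema) (K : List Schema) : Site S K S K
  | seqL {a b : Schema} {K : List Schema} {P : Schema} {L : List Schema} :
      Site a (b :: K) P L → Site (.seq a b) K P L
  | seqR {a b : Schema} {K : List Schema} {P : Schema} {L : List Schema} :
      Site b K P L → Site (.seq a b) K P L
  | iteT {p l : ℕ} {args : List ℕ} {t e : Schema} {K : List Schema} {P : Schema}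
      {L : List Schema} : Site t K P L → Site (.ite p l args t e) K P L
  | iteF {p l : ℕ} {args : List ℕ} {t e : Schema} {K : List Schema} {P : Schema}
      {L : List Schema} : Site e K P L → Site (.ite p l args t e) K P L
  | whB {p l : ℕ} {args : List ℕ} {B : Schema} {K : List Schema} {P : Schema}
      {L : List Schema} : Site B (.whil p l args B :: K) P L → Site (.whil p l args B) K P L

theorem Site.trans {S K P L Q M} (h : Site S K P L) (h' : Site P L Q M) : Site S K Q M := by
  induction h with
  | refl => exact h'
  | seqL _ ih => exact .seqL (ih h')
  | seqR _ ih => exact .seqR (ih h')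
  | iteT _ ih => exact .iteT (ih h')
  | iteF _ ih => exact .iteF (ih h')
  | whB _ ih => exact .whB (ih h')

theorem Site.after {S K P L} (h : Site S K P L) :
    L = K ∨ ∃ P' L', L = P' :: L' ∧ Site S K P' L' := by
  induction h with
  | refl => exact .inl rfl
  | seqL _ ih =>
    rcases ih with rfl | ⟨P', L', rfl, h⟩
    · exact .inr ⟨_, _, rfl, .seqR (.refl _ _)⟩
    · exact .inr ⟨_, _, rfl, .seqL h⟩
  | seqR _ ih => exact ih.imp_right fun ⟨P', L', e, h⟩ => ⟨P', L', e, .seqR h⟩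
  | iteT _ ih => exact ih.imp_right fun ⟨P', L', e, h⟩ => ⟨P', L', e, .iteT h⟩
  | iteF _ ih => exact ih.imp_right fun ⟨P', L', e, h⟩ => ⟨P', L', e, .iteF h⟩
  | whB _ ih =>
    rcases ih with rfl | ⟨P', L', rfl, h⟩
    · exact .inr ⟨_, _, rfl, .refl _ _⟩
    · exact .inr ⟨_, _, rfl, .whB h⟩

theorem Run.site {K₀ w K'} (h : Run K₀ w K') : ∀ {S K},
    (K₀ = K ∨ ∃ P L, K₀ = P :: L ∧ Site S K P L) → K = [] →
    (K' = [] ∨ ∃ P L, K' = P :: L ∧ Site S [] P L) := by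
  induction h with
  | nil => rintro S K h rfl; exact h
  | @step K₀ v K₁ w K₂ hs hr ih =>
    rintro S K h rfl
    refine ih ?_ rfl
    rcases h with rfl | ⟨P, L, rfl, h⟩
    · cases hs
    · cases hs with
      | skip => exact h.after
      | seq => exact .inr ⟨_, _, rfl, h.trans (.seqL (.refl _ _))⟩
      | asn => exact h.after
      | iteT => exact .inr ⟨_, _, rfl, h.trans (.iteT (.refl _ _))⟩
      | iteF => exact .inr ⟨_, _, rfl, h.trans (.iteF (.refl _ _))⟩
      | whT => exact .inr ⟨_, _, rfl, h.trans (.whB (.refl _ _))⟩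
      | whF => exact h.after

theorem Run.site_of_cons {S w P L} (h : Run [S] w (P :: L)) : Site S [] P L := by
  rcases h.site (S := S) (K := []) (.inr ⟨S, [], rfl, .refl _ _⟩) rfl with h | ⟨P', L', e, h⟩
  · simp at h
  · obtain ⟨rfl, rfl⟩ := List.cons_eq_cons.1 e
    exact h

/-- The labelled symbol heading an assignment, an if-schema or a while-schema. -/
def hdSym : Schema → Option LSym
  | .skip => none
  | .assign _ f l _ => some (.fn f l)
  | .seq _ _ => none
  | .ite p l _ _ _ => some (.pr p l)
  | .whil p l _ _ => some (.pr p l)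

theorem Step.hdSym {K c K'} (h : Step K [c] K') :
    ∃ P L, K = P :: L ∧ hdSym P = some (lsymOf c) := by
  cases h <;> exact ⟨_, _, rfl, rfl⟩

theorem Site.count {S K P L x} (h : Site S K P L) (hx : hdSym P = some x) :
    1 ≤ lsymCount S x := by
  induction h with
  | refl S K =>
    cases S <;> simp [hdSym] at hx <;> subst hx <;> simp [lsymCount] <;> omega
  | seqL _ ih => have := ih hx; simp only [lsymCount]; omega
  | seqR _ ih => have := ih hx; simp only [lsymCount]; omega
  | iteT _ ih => have := ih hx; simp only [lsymCount]; omega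
  | iteF _ ih => have := ih hx; simp only [lsymCount]; omega
  | whB _ ih => have := ih hx; simp only [lsymCount]; omega

theorem Site.unique {S : Schema} {x : LSym} : ∀ {K P L P' L'}, lsymCount S x ≤ 1 →
    Site S K P L → Site S K P' L' → hdSym P = some x → hdSym P' = some x →
    P = P' ∧ L = L' := by
  induction S with
  | skip => intro K P L P' L' _ h h'; cases h; cases h'; simp
  | assign => intro K P L P' L' _ h h'; cases h; cases h'; simp
  | seq a b iha ihb =>
    intro K P L P' L' hc h h' hx hx'
    simp only [lsymCount] at hc
    cases h with
    | refl => simp [hdSym] at hx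
    | seqL h =>
      cases h' with
      | refl => simp [hdSym] at hx'
      | seqL h' => exact iha (by omega) h h' hx hx'
      | seqR h' => have := h.count hx; have := h'.count hx'; omega
    | seqR h =>
      cases h' with
      | refl => simp [hdSym] at hx'
      | seqL h' => have := h.count hx; have := h'.count hx'; omega
      | seqR h' => exact ihb (by omega) h h' hx hx'
  | ite p l a t e iht ihe =>
    intro K P L P' L' hc h h' hx hx'
    simp only [lsymCount] at hc
    cases h with
    | refl =>
      obtain rfl : LSym.pr p l = x := by simpa [hdSym] using hx
      simp only [if_true] at hc
      cases h' with
      | refl => simp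
      | iteT h' => have := h'.count hx'; omega
      | iteF h' => have := h'.count hx'; omega
    | iteT h =>
      have := h.count hx
      cases h' with
      | refl =>
        obtain rfl : LSym.pr p l = x := by simpa [hdSym] using hx'
        simp only [if_true] at hc
        omega
      | iteT h' => exact iht (by omega) h h' hx hx'
      | iteF h' => have := h'.count hx'; omega
    | iteF h =>
      have := h.count hx
      cases h' with
      | refl =>
        obtain rfl : LSym.pr p l = x := by simpa [hdSym] using hx'
        simp only [if_true] at hc
        omega
      | iteT h' => have := h'.count hx'; omega
      | iteF h' => exact ihe (by omega) h h' hx hx'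
  | whil p l a B ih =>
    intro K P L P' L' hc h h' hx hx'
    simp only [lsymCount] at hc
    cases h with
    | refl =>
      obtain rfl : LSym.pr p l = x := by simpa [hdSym] using hx
      simp only [if_true] at hc
      cases h' with
      | refl => simp
      | whB h' => have := h'.count hx'; omega
    | whB h =>
      have := h.count hx
      cases h' with
      | refl =>
        obtain rfl : LSym.pr p l = x := by simpa [hdSym] using hx'
        simp only [if_true] at hc
        omega
      | whB h' => exact ih (by omega) h h' hx hx'

theorem exists_site {T : Schema} {x : LSym} : ∀ (K), x ∈ lsymSet T →
    ∃ P L, Site T K P L ∧ hdSym P = some x := by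
  induction T with
  | skip => exact fun K h => h.elim
  | assign => rintro K rfl; exact ⟨_, _, .refl _ _, rfl⟩
  | seq a b iha ihb =>
    rintro K (h | h)
    · obtain ⟨P, L, h1, h2⟩ := iha (b :: K) h
      exact ⟨P, L, .seqL h1, h2⟩
    · obtain ⟨P, L, h1, h2⟩ := ihb K h
      exact ⟨P, L, .seqR h1, h2⟩
  | ite p l a t e iht ihe =>
    rintro K (rfl | h | h)
    · exact ⟨_, _, .refl _ _, rfl⟩
    · obtain ⟨P, L, h1, h2⟩ := iht K h
      exact ⟨P, L, .iteT h1, h2⟩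
    · obtain ⟨P, L, h1, h2⟩ := ihe K h
      exact ⟨P, L, .iteF h1, h2⟩
  | whil p l a B ih =>
    rintro K (rfl | h)
    · exact ⟨_, _, .refl _ _, rfl⟩
    · obtain ⟨P, L, h1, h2⟩ := ih (.whil p l a B :: K) h
      exact ⟨P, L, .whB h1, h2⟩

theorem Site.reach {T K P L} (h : Site T K P L) : ∃ w, Run (T :: K) w (P :: L) := by
  induction h with
  | refl => exact ⟨[], .nil _⟩
  | seqL _ ih => obtain ⟨w, h⟩ := ih; exact ⟨_, .step (.seq _ _ _) h⟩
  | @seqR a b K _ _ _ ih =>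
    obtain ⟨w, h⟩ := ih
    obtain ⟨v, hv, -⟩ := exists_allF a (b :: K)
    exact ⟨_, .step (.seq _ _ _) (hv.trans h)⟩
  | iteT _ ih => obtain ⟨w, h⟩ := ih; exact ⟨_, .step (.iteT _ _ _ _ _ _) h⟩
  | iteF _ ih => obtain ⟨w, h⟩ := ih; exact ⟨_, .step (.iteF _ _ _ _ _ _) h⟩
  | whB _ ih => obtain ⟨w, h⟩ := ih; exact ⟨_, .step (.whT _ _ _ _ _) h⟩

theorem lettL_nil : lettL [] = ∅ := by ext c; simp [lettL]

theorem lettL_cons (T : Schema) (M : List Schema) : lettL (T :: M) = lett T ∪ lettL M := by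
  ext c; simp [lettL]

theorem lettL_append (M N : List Schema) : lettL (M ++ N) = lettL M ∪ lettL N := by
  ext c; simp [lettL, or_and_right, exists_or]

theorem Site.bottom {T K Q M} (h : Site T K Q M) :
    ∃ M₀, M = M₀ ++ K ∧ lettL (Q :: M₀) ⊆ lett T := by
  induction h with
  | refl S K => exact ⟨[], rfl, by simp [lettL_cons, lettL_nil]⟩
  | @seqL a b K _ _ _ ih =>
    obtain ⟨M₀, rfl, h⟩ := ih
    refine ⟨M₀ ++ [b], by simp, ?_⟩
    simp only [lettL_append, lettL_cons, lettL_nil, lett, Set.union_subset_iff] at h ⊢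
    exact ⟨h.1.trans Set.subset_union_left, h.2.trans Set.subset_union_left,
      Set.subset_union_right, Set.empty_subset _⟩
  | seqR _ ih =>
    obtain ⟨M₀, rfl, h⟩ := ih
    exact ⟨M₀, rfl, h.trans Set.subset_union_right⟩
  | iteT _ ih =>
    obtain ⟨M₀, rfl, h⟩ := ih
    exact ⟨M₀, rfl, h.trans (Set.subset_union_left.trans Set.subset_union_right)⟩
  | iteF _ ih =>
    obtain ⟨M₀, rfl, h⟩ := ih
    exact ⟨M₀, rfl, h.trans (Set.subset_union_right.trans Set.subset_union_right)⟩
  | @whB p l a B K _ _ _ ih =>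
    obtain ⟨M₀, rfl, h⟩ := ih
    refine ⟨M₀ ++ [.whil p l a B], by simp, ?_⟩
    simp only [lettL_append, lettL_cons, lettL_nil, lett, Set.union_subset_iff] at h ⊢
    exact ⟨h.1.trans Set.subset_union_right, h.2.trans Set.subset_union_right,
      ⟨Set.subset_union_left, Set.subset_union_right⟩, Set.empty_subset _⟩

theorem Occurs.site {P S : Schema} (h : Occurs P S) : ∀ K, ∃ L, Site S K P L := by
  induction h with
  | refl => exact fun K => ⟨K, .refl _ _⟩
  | seqL _ ih => intro K; obtain ⟨L, h⟩ := ih (_ :: K); exact ⟨L, .seqL h⟩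
  | seqR _ ih => intro K; obtain ⟨L, h⟩ := ih K; exact ⟨L, .seqR h⟩
  | iteT _ ih => intro K; obtain ⟨L, h⟩ := ih K; exact ⟨L, .iteT h⟩
  | iteF _ ih => intro K; obtain ⟨L, h⟩ := ih K; exact ⟨L, .iteF h⟩
  | whilB _ ih => intro K; obtain ⟨L, h⟩ := ih (_ :: K); exact ⟨L, .whB h⟩

theorem predCount_pos {S : Schema} {p l : ℕ} : LSym.pr p l ∈ lsymSet S → 1 ≤ predCount S p := by
  induction S with
  | skip => exact fun h => h.elim
  | assign => intro h; cases h
  | seq a b iha ihb =>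
    rintro (h | h)
    · have := iha h; simp only [predCount]; omega
    · have := ihb h; simp only [predCount]; omega
  | ite q m a t e iht ihe =>
    rintro (h | h | h)
    · obtain ⟨rfl, rfl⟩ := LSym.pr.inj h; simp only [predCount, if_true]; omega
    · have := iht h; simp only [predCount]; omega
    · have := ihe h; simp only [predCount]; omega
  | whil q m a B ih =>
    rintro (h | h)
    · obtain ⟨rfl, rfl⟩ := LSym.pr.inj h; simp only [predCount, if_true]; omega
    · have := ih h; simp only [predCount]; omega

theorem label_unique {S : Schema} {p l l' : ℕ} : predCount S p ≤ 1 →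
    LSym.pr p l ∈ lsymSet S → LSym.pr p l' ∈ lsymSet S → l = l' := by
  induction S with
  | skip => exact fun _ h => h.elim
  | assign => intro _ h; cases h
  | seq a b iha ihb =>
    simp only [predCount]
    rintro hc (h | h) (h' | h')
    · exact iha (by omega) h h'
    · have := predCount_pos h; have := predCount_pos h'; omega
    · have := predCount_pos h; have := predCount_pos h'; omega
    · exact ihb (by omega) h h'
  | ite q m a t e iht ihe =>
    simp only [predCount]
    rintro hc (h | h | h) (h' | h' | h')
    · obtain ⟨rfl, rfl⟩ := LSym.pr.inj h; exact (LSym.pr.inj h').2.symm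
    · obtain ⟨rfl, rfl⟩ := LSym.pr.inj h
      simp only [if_true] at hc
      have := predCount_pos h'; omega
    · obtain ⟨rfl, rfl⟩ := LSym.pr.inj h
      simp only [if_true] at hc
      have := predCount_pos h'; omega
    · obtain ⟨rfl, rfl⟩ := LSym.pr.inj h'
      simp only [if_true] at hc
      have := predCount_pos h; omega
    · exact iht (by omega) h h'
    · have := predCount_pos h; have := predCount_pos h'; omega
    · obtain ⟨rfl, rfl⟩ := LSym.pr.inj h'
      simp only [if_true] at hc
      have := predCount_pos h; omega
    · have := predCount_pos h; have := predCount_pos h'; omega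
    · exact ihe (by omega) h h'
  | whil q m a B ih =>
    simp only [predCount]
    rintro hc (h | h) (h' | h')
    · obtain ⟨rfl, rfl⟩ := LSym.pr.inj h; exact (LSym.pr.inj h').2.symm
    · obtain ⟨rfl, rfl⟩ := LSym.pr.inj h
      simp only [if_true] at hc
      have := predCount_pos h'; omega
    · obtain ⟨rfl, rfl⟩ := LSym.pr.inj h'
      simp only [if_true] at hc
      have := predCount_pos h; omega
    · exact ih (by omega) h h'

theorem Run.letters {K w K'} (h : Run K w K') : ∀ c ∈ w, c ∈ lettL K := by
  rcases h.split_cont (M := K) (K := []) (by simp) with ⟨w₁, w₂, rfl, h1, h2, h3⟩ | ⟨-, -, -, h⟩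
  · rcases h2.inv with ⟨rfl, -⟩ | ⟨v, K₁, w', hs, -⟩
    · simpa using h3
    · cases hs
  · exact h

theorem Run.lett_mem {S w K} (h : Run [S] w K) {c} (hc : c ∈ w) : c ∈ lett S := by
  simpa [lettL_cons, lettL_nil] using h.letters c hc

/-- In a well-labelled schema the control state before reading a letter is determined by the
labelled symbol of that letter. -/
theorem Run.same_state {S : Schema} (hS : WellLabelled S) {w K K₁ c w' K' K₁' c'}
    (h : Run [S] w K) (hc : Step K [c] K₁) (h' : Run [S] w' K') (hc' : Step K' [c'] K₁')
    (e : lsymOf c = lsymOf c') : K = K' := by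
  obtain ⟨P, L, rfl, hP⟩ := hc.hdSym
  obtain ⟨P', L', rfl, hP'⟩ := hc'.hdSym
  obtain ⟨rfl, rfl⟩ := Site.unique (hS _) h.site_of_cons h'.site_of_cons hP (by rw [hP', e])
  rfl

/-- The continuation of a path after an occurrence of a labelled symbol can be spliced onto any
path leading to that labelled symbol. -/
theorem Run.splice {S : Schema} (hS : WellLabelled S) {w₁ c₁ w₂ K₂ v₁ c₂ v₂ L₂}
    (h : Run [S] (w₁ ++ c₁ :: w₂) K₂) (h' : Run [S] (v₁ ++ c₂ :: v₂) L₂)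
    (e : lsymOf c₁ = lsymOf c₂) : Run [S] (v₁ ++ c₁ :: w₂) K₂ := by
  obtain ⟨K, K₁, h1, h2, h3⟩ := h.at_letter rfl
  obtain ⟨K', K₁', h1', h2', h3'⟩ := h'.at_letter rfl
  obtain rfl := h1.same_state hS h2 h1' h2' e
  exact h1'.trans (Run.step h2 h3)

theorem Run.same_prd {S : Schema} (hS : Special S) {w₁ w₂ K₂ v₁ v₂ L₂ p l a b l' a' b'}
    (h : Run [S] (w₁ ++ Letter.prd p l a b :: w₂) K₂)
    (h' : Run [S] (v₁ ++ Letter.prd p l' a' b' :: v₂) L₂) : l = l' ∧ a = a' := by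
  have hl : l = l' := label_unique (hS.2.1 p)
    (lsymOf_mem_of_lett S (h.lett_mem (c := Letter.prd p l a b) (by simp)))
    (lsymOf_mem_of_lett S (h'.lett_mem (c := Letter.prd p l' a' b') (by simp)))
  subst hl
  obtain ⟨K, K₁, h1, h2, -⟩ := h.at_letter rfl
  obtain ⟨K', K₁', h1', h2', -⟩ := h'.at_letter rfl
  obtain rfl := h1.same_state hS.1 h2 h1' h2' rfl
  cases h2 <;> cases h2' <;> simp

theorem Run.same_asn {S : Schema} (hS : WellLabelled S) {w₁ w₂ K₂ v₁ v₂ L₂ y f l a y' a'}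
    (h : Run [S] (w₁ ++ Letter.asn y f l a :: w₂) K₂)
    (h' : Run [S] (v₁ ++ Letter.asn y' f l a' :: v₂) L₂) : y = y' ∧ a = a' := by
  obtain ⟨K, K₁, h1, h2, -⟩ := h.at_letter rfl
  obtain ⟨K', K₁', h1', h2', -⟩ := h'.at_letter rfl
  obtain rfl := h1.same_state hS h2 h1' h2' rfl
  cases h2; cases h2'; simp

end SchemaSlicing

namespace SchemaSlicing

/-! ### Herbrand execution and predicate terms along a path -/

noncomputable instance : DecidableEq Trm := Classical.decEq _

/-- Herbrand execution of a word from an arbitrary state. -/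
def ex (d : ℕ → Trm) (w : List Letter) : ℕ → Trm := execP (herb fun _ _ => false) d w

theorem hexec_eq (w : List Letter) : hexec w = ex eSt w := rfl

theorem ex_append (d : ℕ → Trm) (w w' : List Letter) : ex d (w ++ w') = ex (ex d w) w' := by
  simp [ex, execP, List.foldl_append]

@[simp] theorem ex_nil (d : ℕ → Trm) : ex d [] = d := rfl

@[simp] theorem ex_asn (d : ℕ → Trm) (y f l : ℕ) (a : List ℕ) (w : List Letter) :
    ex d (.asn y f l a :: w) = ex (Function.update d y (.app f (a.map d))) w := rfl

@[simp] theorem ex_prd (d : ℕ → Trm) (p l : ℕ) (a : List ℕ) (b : Bool) (w : List Letter) :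
    ex d (.prd p l a b :: w) = ex d w := rfl

theorem execP_herb (i : HInterp) (d : ℕ → Trm) (w : List Letter) :
    execP (herb i) d w = ex d w := by
  have : stepL (herb i) = stepL (herb fun _ _ => false) := by
    funext d c; cases c <;> rfl
  simp [ex, execP, this]

/-- The predicate terms met along a word executed from `d`, with the truth values chosen. -/
def dec (d : ℕ → Trm) : List Letter → List ((ℕ × List Trm) × Bool)
  | [] => []
  | .asn y f _ a :: w => dec (Function.update d y (.app f (a.map d))) w
  | .prd p _ a b :: w => ((p, a.map d), b) :: dec d w

theorem dec_append (d : ℕ → Trm) (w w' : List Letter) :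
    dec d (w ++ w') = dec d w ++ dec (ex d w) w' := by
  induction w generalizing d with
  | nil => rfl
  | cons c w ih =>
    cases c with
    | asn y f l a => simp [dec, ih]
    | prd p l a b => simp [dec, ih]

theorem mem_dec {d : ℕ → Trm} {w : List Letter} {x : (ℕ × List Trm) × Bool} :
    x ∈ dec d w ↔ ∃ τ p l a b τ', w = τ ++ Letter.prd p l a b :: τ' ∧
      x = ((p, a.map (ex d τ)), b) := by
  induction w generalizing d with
  | nil => simp [dec]
  | cons c w ih =>
    cases c with
    | asn y f l a =>
      rw [dec, ih]
      constructor
      · rintro ⟨τ, p, l', a', b, τ', rfl, rfl⟩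
        exact ⟨.asn y f l a :: τ, p, l', a', b, τ', rfl, rfl⟩
      · rintro ⟨τ, p, l', a', b, τ', e, rfl⟩
        rcases τ with _ | ⟨c, τ⟩
        · simp at e
        · obtain ⟨rfl, rfl⟩ := List.cons_eq_cons.1 e
          exact ⟨τ, p, l', a', b, τ', rfl, rfl⟩
    | prd p l a b =>
      rw [dec, List.mem_cons, ih]
      constructor
      · rintro (rfl | ⟨τ, p', l', a', b', τ', rfl, rfl⟩)
        · exact ⟨[], p, l, a, b, w, rfl, rfl⟩
        · exact ⟨.prd p l a b :: τ, p', l', a', b', τ', rfl, rfl⟩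
      · rintro ⟨τ, p', l', a', b', τ', e, rfl⟩
        rcases τ with _ | ⟨c, τ⟩
        · simp only [List.nil_append, List.cons.injEq, Letter.prd.injEq] at e
          obtain ⟨⟨rfl, rfl, rfl, rfl⟩, rfl⟩ := e
          exact .inl rfl
        · obtain ⟨rfl, rfl⟩ := List.cons_eq_cons.1 e
          exact .inr ⟨τ, p', l', a', b', τ', rfl, rfl⟩

theorem mem_dec_of_prefix {d : ℕ → Trm} {w τ : List Letter} {p l a b}
    (h : τ ++ [Letter.prd p l a b] <+: w) : ((p, a.map (ex d τ)), b) ∈ dec d w := by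
  obtain ⟨z, rfl⟩ := h
  exact mem_dec.2 ⟨τ, p, l, a, b, z, by simp, rfl⟩

theorem hAgrees_iff {i : HInterp} {w : List Letter} :
    hAgrees i w ↔ ∀ x ∈ dec eSt w, i x.1.1 x.1.2 = x.2 := by
  constructor
  · intro h x hx
    obtain ⟨τ, p, l, a, b, τ', rfl, rfl⟩ := mem_dec.1 hx
    have := h τ p l a b ⟨τ', by simp⟩
    rwa [execP_herb] at this
  · intro h τ p l a b hp
    rw [execP_herb]
    exact h _ (mem_dec_of_prefix hp)

/-- The last assignment to a variable along a word. -/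
theorem last_assign (w : List Letter) (z : ℕ) :
    (∃ w₁ g l a w₂, w = w₁ ++ Letter.asn z g l a :: w₂ ∧
      ∀ d, ex d w z = .app g (a.map (ex d w₁))) ∨
    ((∀ g l a, Letter.asn z g l a ∉ w) ∧ ∀ d, ex d w z = d z) := by
  induction w using List.reverseRecOn with
  | nil => right; simp
  | append_singleton w c ih =>
    cases c with
    | prd p l a b =>
      rcases ih with ⟨w₁, g, m, a', w₂, rfl, h⟩ | ⟨h1, h2⟩
      · exact .inl ⟨w₁, g, m, a', w₂ ++ [.prd p l a b], by simp, fun d => by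
          rw [ex_append]; exact h d⟩
      · refine .inr ⟨by simpa using h1, fun d => ?_⟩
        rw [ex_append]; exact h2 d
    | asn y f l a =>
      by_cases hy : z = y
      · subst hy
        exact .inl ⟨w, f, l, a, [], rfl, fun d => by simp [ex_append]⟩
      · rcases ih with ⟨w₁, g, m, a', w₂, rfl, h⟩ | ⟨h1, h2⟩
        · refine .inl ⟨w₁, g, m, a', w₂ ++ [.asn y f l a], by simp, fun d => ?_⟩
          rw [ex_append]
          simpa [Function.update_of_ne hy] using h d
        · refine .inr ⟨by simpa [hy] using h1, fun d => ?_⟩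
          rw [ex_append]
          simpa [Function.update_of_ne hy] using h2 d

/-- The variable `v` occurs in a term. -/
inductive VIn (v : ℕ) : Trm → Prop
  | here : VIn v (.var v)
  | there {g : ℕ} {ts : List Trm} {t : Trm} : t ∈ ts → VIn v t → VIn v (.app g ts)

theorem vIn_var {v x : ℕ} : VIn v (.var x) ↔ x = v := by
  constructor
  · intro h; cases h; rfl
  · rintro rfl; exact .here

theorem vIn_app {v g : ℕ} {ts : List Trm} : VIn v (.app g ts) ↔ ∃ t ∈ ts, VIn v t := by
  constructor
  · intro h; cases h with | there h h' => exact ⟨_, h, h'⟩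
  · rintro ⟨t, h, h'⟩; exact .there h h'

/-- The value of `x` after a word depends on the initial values of the variables in the term
computed from the natural state. -/
theorem eq_of_ex_eq {v : ℕ} {d d' : ℕ → Trm} (w : List Letter) : ∀ x,
    VIn v (ex eSt w x) → ex d w x = ex d' w x → d v = d' v := by
  induction w using List.reverseRecOn with
  | nil => intro x hv h; obtain rfl := vIn_var.1 hv; exact h
  | append_singleton w c ih =>
    intro x hv h
    cases c with
    | prd p l a b => simp only [ex_append, ex_prd, ex_nil] at hv h; exact ih x hv h
    | asn y f l a =>
      simp only [ex_append, ex_asn, ex_nil] at hv h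
      by_cases hx : x = y
      · subst hx
        simp only [Function.update_self, Trm.app.injEq, true_and] at hv h
        obtain ⟨t, ht, hv⟩ := vIn_app.1 hv
        obtain ⟨z, hz, rfl⟩ := List.mem_map.1 ht
        exact ih z hv (List.map_inj_left.1 h z hz)
      · simp only [Function.update_of_ne hx] at hv h
        exact ih x hv h

theorem vIn_append {v : ℕ} (w w' : List Letter) : ∀ x,
    VIn v (ex eSt (w ++ w') x) ↔ ∃ z, VIn z (ex eSt w' x) ∧ VIn v (ex eSt w z) := by
  induction w' using List.reverseRecOn with
  | nil => intro x; simp [eSt, vIn_var]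
  | append_singleton w' c ih =>
    intro x
    rw [← List.append_assoc]
    cases c with
    | prd p l a b => rw [ex_append eSt (w ++ w'), ex_append eSt w']; exact ih x
    | asn y f l a =>
      rw [ex_append eSt (w ++ w'), ex_append eSt w']
      by_cases hx : x = y
      · subst hx
        simp only [ex_asn, ex_nil, Function.update_self, vIn_app, List.mem_map,
          exists_exists_and_eq_and, ih]
        constructor
        · rintro ⟨t, ht, z, h1, h2⟩; exact ⟨z, ⟨t, ht, h1⟩, h2⟩
        · rintro ⟨z, ⟨t, ht, h1⟩, h2⟩; exact ⟨t, ht, z, h1, h2⟩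
      · simpa [Function.update_of_ne hx] using ih x

theorem occIn_of_vIn {f v : ℕ} {d : ℕ → Trm} (hd : OccIn f (d v)) (w : List Letter) : ∀ x,
    VIn v (ex eSt w x) → OccIn f (ex d w x) := by
  induction w using List.reverseRecOn with
  | nil => intro x hv; obtain rfl := vIn_var.1 hv; exact hd
  | append_singleton w c ih =>
    intro x hv
    cases c with
    | prd p l a b => rw [ex_append] at hv ⊢; exact ih x hv
    | asn y f l a =>
      rw [ex_append] at hv ⊢
      by_cases hx : x = y
      · subst hx
        simp only [ex_asn, ex_nil, Function.update_self] at hv ⊢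
        obtain ⟨t, ht, hv⟩ := vIn_app.1 hv
        obtain ⟨z, hz, rfl⟩ := List.mem_map.1 ht
        exact .there (List.mem_map.2 ⟨z, hz, rfl⟩) (ih z hv)
      · simp only [ex_asn, ex_nil, Function.update_of_ne hx] at hv ⊢
        exact ih x hv

/-- If no term built by a word from the state `d` collides with a value of `d`, then equalities
between values computed from `d` hold from every initial state. -/
theorem exchange_aux {d : ℕ → Trm} (Q : List Letter → Prop)
    (hQ : ∀ β γ, Q (β ++ γ) → Q β) (hinj : Function.Injective d)
    (hfresh : ∀ β y f l a, Q (β ++ [Letter.asn y f l a]) → ∀ x, d x ≠ .app f (a.map (ex d β)))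
    (d' : ℕ → Trm) : ∀ n β₁ β₂ x y, β₁.length + β₂.length ≤ n → Q β₁ → Q β₂ →
      ex d β₁ x = ex d β₂ y → ex d' β₁ x = ex d' β₂ y := by
  intro n
  induction n with
  | zero =>
    intro β₁ β₂ x y hn _ _ h
    obtain rfl : β₁ = [] := List.length_eq_zero_iff.1 (by omega)
    obtain rfl : β₂ = [] := List.length_eq_zero_iff.1 (by omega)
    rw [hinj h]
  | succ n ih =>
    intro β₁ β₂ x y hn h1 h2 h
    rcases last_assign β₁ x with ⟨w₁, g, l, a, w₂, rfl, e1⟩ | ⟨-, e1⟩ <;>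
    rcases last_assign β₂ y with ⟨v₁, g', l', a', v₂, rfl, e2⟩ | ⟨-, e2⟩
    · rw [e1, e2] at h ⊢
      obtain ⟨rfl, hm⟩ := Trm.app.inj h
      congr 1
      simp only [List.length_append, List.length_cons] at hn
      have hlen : a.length = a'.length := by simpa using congrArg List.length hm
      refine List.ext_getElem (by simpa using hlen) fun k hk hk' => ?_
      simp only [List.length_map] at hk hk'
      have := List.getElem_of_eq hm (i := k) (by simpa using hk)
      simp only [List.getElem_map] at this ⊢
      exact ih w₁ v₁ _ _ (by omega) (hQ _ _ h1) (hQ _ _ h2) this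
    · rw [e1, e2] at h
      exact absurd h.symm (hfresh w₁ x g l a (hQ _ w₂ (by simpa using h1)) y)
    · rw [e1, e2] at h
      exact absurd h (hfresh v₁ y g' l' a' (hQ _ v₂ (by simpa using h2)) x)
    · rw [e1, e2] at h ⊢
      rw [hinj h]

theorem ex_eq_of_hexec_eq {β₁ β₂ : List Letter} {x y : ℕ} (h : ex eSt β₁ x = ex eSt β₂ y)
    (d : ℕ → Trm) : ex d β₁ x = ex d β₂ y :=
  exchange_aux (fun _ => True) (fun _ _ _ => trivial) (fun x y h => Trm.var.inj h)
    (fun β y f l a _ x h => by cases h) d _ β₁ β₂ x y le_rfl trivial trivial h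

theorem map_ex_eq {d d' : ℕ → Trm} {β₁ β₂ : List Letter} {a a' : List ℕ}
    (H : ∀ x y, ex d β₁ x = ex d β₂ y → ex d' β₁ x = ex d' β₂ y)
    (h : a.map (ex d β₁) = a'.map (ex d β₂)) : a.map (ex d' β₁) = a'.map (ex d' β₂) := by
  have hlen : a.length = a'.length := by simpa using congrArg List.length h
  refine List.ext_getElem (by simpa using hlen) fun k hk hk' => ?_
  simp only [List.length_map] at hk hk'
  have := List.getElem_of_eq h (i := k) (by simpa using hk)
  simp only [List.getElem_map] at this ⊢
  exact H _ _ this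

/-- Liberality: the term built by the last assignment of a path is new. -/
theorem fresh_term {S : Schema} (hS : Special S) {w K y f l a}
    (h : Run [S] (w ++ [Letter.asn y f l a]) K) {v : List Letter} (hv : v <+: w) (x : ℕ) : ex eSt v x ≠ .app f (a.map (ex eSt w)) := by
  obtain ⟨i, hi⟩ := hS.2.2.1 _ (mem_prePaths_iff.2 ⟨K, h⟩)
  rcases last_assign v x with ⟨w₁, g, m, b, w₂, rfl, e⟩ | ⟨-, e⟩
  · obtain ⟨z, rfl⟩ := hv
    have := hS.2.2.2.1 i w₁ (w₂ ++ z) x g m b y f l a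
    simp only [hexec_eq, List.append_assoc, List.cons_append] at this h hi
    have := this (mem_prePaths_iff.2 ⟨K, h⟩) hi
    rw [e]
    intro h'
    apply this
    rw [ex_append, ex_asn, ex_nil, Function.update_self, h', ex_append, ex_append]
    simp [ex_append]
  · rw [e]; intro h'; cases h'

theorem ex_injective {S : Schema} (hS : Special S) {w : List Letter} :
    ∀ {K}, Run [S] w K → Function.Injective (ex eSt w) := by
  induction w using List.reverseRecOn with
  | nil => intro K _ x y h; exact Trm.var.inj h
  | append_singleton w c ih =>
    intro K h
    obtain ⟨K', h'⟩ := h.prefix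
    cases c with
    | prd => rw [ex_append]; exact ih h'
    | asn y f l a =>
      rw [ex_append]
      intro x z hxz
      have hf := fresh_term hS h (List.prefix_refl w)
      simp only [ex_asn, ex_nil] at hxz
      by_cases hx : x = y <;> by_cases hz : z = y
      · rw [hx, hz]
      · subst hx
        rw [Function.update_self, Function.update_of_ne hz] at hxz
        exact absurd hxz.symm (hf z)
      · subst hz
        rw [Function.update_self, Function.update_of_ne hx] at hxz
        exact absurd hxz (hf x)
      · rw [Function.update_of_ne hz, Function.update_of_ne hx] at hxz
        exact ih h' hxz

/-- Values computed after a common head that coincide do so after every head. -/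
theorem exchange {S : Schema} (hS : Special S) {H β₁ β₂ : List Letter} {K₁ K₂}
    (h₁ : Run [S] (H ++ β₁) K₁) (h₂ : Run [S] (H ++ β₂) K₂) {x y : ℕ} (e : ex (ex eSt H) β₁ x = ex (ex eSt H) β₂ y)
    (d : ℕ → Trm) : ex d β₁ x = ex d β₂ y := by
  obtain ⟨K, hH⟩ := h₁.prefix
  refine exchange_aux (fun β => ∃ K, Run [S] (H ++ β) K) ?_ (ex_injective hS hH) ?_ d _
    β₁ β₂ x y le_rfl ⟨_, h₁⟩ ⟨_, h₂⟩ e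
  · rintro β γ ⟨K, h⟩
    rw [← List.append_assoc] at h
    exact h.prefix
  · rintro β y f l a ⟨K, h⟩ x
    rw [← List.append_assoc] at h
    rw [← ex_append]
    exact fresh_term hS h (List.prefix_append _ _) x

theorem exchange_map {S : Schema} (hS : Special S) {H β₁ β₂ : List Letter} {K₁ K₂}
    (h₁ : Run [S] (H ++ β₁) K₁) (h₂ : Run [S] (H ++ β₂) K₂) {a a' : List ℕ}
    (e : a.map (ex (ex eSt H) β₁) = a'.map (ex (ex eSt H) β₂)) (d : ℕ → Trm) :
    a.map (ex d β₁) = a'.map (ex d β₂) :=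
  map_ex_eq (fun _ _ h => exchange hS h₁ h₂ h d) e

/-- Freeness: no predicate term is met twice along a path. -/
theorem dec_nodup {S : Schema} (hS : Special S) {w : List Letter} : ∀ {K}, Run [S] w K →
    ((dec eSt w).map Prod.fst).Nodup := by
  induction w using List.reverseRecOn with
  | nil => intro K _; simp [dec]
  | append_singleton w c ih =>
    intro K h
    obtain ⟨K', h'⟩ := h.prefix
    cases c with
    | asn => simpa [dec_append, dec] using ih h'
    | prd p l a b =>
      simp only [dec_append, dec, List.map_append, List.map_cons, List.map_nil]
      refine List.nodup_append.2 ⟨ih h', by simp, ?_⟩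
      rintro k hk k' hk' rfl
      obtain rfl := List.mem_singleton.1 hk'
      obtain ⟨⟨k, b₀⟩, hx, rfl⟩ := List.mem_map.1 hk
      obtain ⟨K'', h''⟩ := h.flip (!b₀)
      obtain ⟨i, hi⟩ := hS.2.2.1 _ (mem_prePaths_iff.2 ⟨K'', h''⟩)
      rw [hAgrees_iff] at hi
      have h1 := hi _ (by rw [dec_append]; exact List.mem_append_left _ hx)
      have h2 := hi ((p, a.map (ex eSt w)), !b₀) (by simp [dec_append, dec])
      simp only at h1 h2 hk'
      rw [← h1] at h2
      simp at h2

theorem key_unique {L : List ((ℕ × List Trm) × Bool)} (h : (L.map Prod.fst).Nodup)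
    {k : ℕ × List Trm} {b b' : Bool} (h1 : (k, b) ∈ L) (h2 : (k, b') ∈ L) : b = b' := by
  have := List.inj_on_of_nodup_map h h1 h2 rfl
  exact (Prod.mk.inj this).2

end SchemaSlicing

namespace SchemaSlicing

/-! ### Substitution -/

/-- Substitution of the values of a state for the variables of a term. -/
def Trm.sub (d : ℕ → Trm) : Trm → Trm
  | .var v => d v
  | .app f ts => .app f (ts.map (Trm.sub d))

theorem ex_eq_sub (d : ℕ → Trm) (w : List Letter) : ∀ x, ex d w x = (ex eSt w x).sub d := by
  induction w using List.reverseRecOn with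
  | nil => intro x; simp [eSt, Trm.sub]
  | append_singleton w c ih =>
    intro x
    rw [ex_append, ex_append]
    cases c with
    | prd => exact ih x
    | asn y f l a =>
      simp only [ex_asn, ex_nil]
      by_cases hx : x = y
      · subst hx
        simp [Trm.sub, ih]
      · simp only [Function.update_of_ne hx, ih x]

/-- Substitution in the arguments of a predicate term. -/
def skey (d : ℕ → Trm) (k : ℕ × List Trm) : ℕ × List Trm := (k.1, k.2.map (Trm.sub d))

theorem map_ex_eq_sub (d : ℕ → Trm) (w : List Letter) (a : List ℕ) :
    a.map (ex d w) = (a.map (ex eSt w)).map (Trm.sub d) := by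
  simp [ex_eq_sub d w]

theorem dec_eq_map (d : ℕ → Trm) (w : List Letter) :
    dec d w = (dec eSt w).map fun x => (skey d x.1, x.2) := by
  induction w using List.reverseRecOn with
  | nil => rfl
  | append_singleton w c ih =>
    rw [dec_append, dec_append, List.map_append, ← ih]
    cases c with
    | asn => simp [dec]
    | prd p l a b => simp [dec, skey, ex_eq_sub d w]

/-! ### Interpretations with finitely many true predicate terms -/

/-- The predicate terms decided positively along a word. -/
noncomputable def tset (d : ℕ → Trm) (w : List Letter) : Finset (ℕ × List Trm) :=
  (((dec d w).filter fun x => x.2).map Prod.fst).toFinset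

theorem mem_tset {d : ℕ → Trm} {w : List Letter} {k : ℕ × List Trm} :
    k ∈ tset d w ↔ (k, true) ∈ dec d w := by
  simp [tset]

theorem tset_append (d : ℕ → Trm) (w w' : List Letter) :
    tset d (w ++ w') = tset d w ∪ tset (ex d w) w' := by
  ext k; simp [mem_tset, dec_append]

theorem tset_eq_image (d : ℕ → Trm) (w : List Letter) :
    tset d w = (tset eSt w).image (skey d) := by
  ext k
  rw [Finset.mem_image, mem_tset, dec_eq_map]
  simp only [mem_tset, List.mem_map, Prod.mk.injEq]
  constructor
  · rintro ⟨⟨t, b⟩, h, rfl, rfl⟩; exact ⟨t, h, rfl⟩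
  · rintro ⟨t, h, rfl⟩; exact ⟨(t, true), h, rfl, rfl⟩

/-- The path agrees with the interpretation whose true predicate terms are those of `A`. -/
def agr (A : Finset (ℕ × List Trm)) (w : List Letter) : Prop :=
  ∀ k b, (k, b) ∈ dec eSt w → (b = true ↔ k ∈ A)

/-- The Herbrand interpretation whose true predicate terms are those of `A`. -/
noncomputable def intF (A : Finset (ℕ × List Trm)) : HInterp := fun p ts => decide ((p, ts) ∈ A)

theorem agr_iff {A : Finset (ℕ × List Trm)} {w : List Letter} :
    agr A w ↔ hAgrees (intF A) w := by
  rw [hAgrees_iff]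
  constructor
  · rintro h ⟨⟨p, ts⟩, b⟩ hx
    have := h _ _ hx
    cases b <;> simp_all [intF]
  · rintro h ⟨p, ts⟩ b hx
    have := h _ hx
    cases b <;> simp_all [intF]

theorem agr.left {A : Finset (ℕ × List Trm)} {w w' : List Letter} (h : agr A (w ++ w')) :
    agr A w := fun k b hk => h k b (by rw [dec_append]; exact List.mem_append_left _ hk)

theorem agr_nil (A : Finset (ℕ × List Trm)) : agr A [] := by simp [agr, dec]

theorem agr.snoc_asn {A : Finset (ℕ × List Trm)} {w : List Letter} (h : agr A w) (y f l a) :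
    agr A (w ++ [.asn y f l a]) := by simpa [agr, dec_append, dec] using h

theorem agr.snoc_prd {A : Finset (ℕ × List Trm)} {w : List Letter} (h : agr A w) {p l a b}
    (hb : b = true ↔ (p, a.map (ex eSt w)) ∈ A) : agr A (w ++ [.prd p l a b]) := by
  intro k b' hk
  simp only [dec_append, dec, List.mem_append, List.mem_singleton, Prod.mk.injEq] at hk
  rcases hk with hk | ⟨rfl, rfl⟩
  · exact h _ _ hk
  · exact hb

theorem agr.prd {A : Finset (ℕ × List Trm)} {w τ : List Letter} (h : agr A w) {p l a b}
    (hp : τ ++ [Letter.prd p l a b] <+: w) : b = true ↔ (p, a.map (ex eSt τ)) ∈ A :=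
  h _ _ (mem_dec_of_prefix hp)

theorem agr.tset_subset {A : Finset (ℕ × List Trm)} {w : List Letter} (h : agr A w) :
    tset eSt w ⊆ A := fun k hk => (h k true (mem_tset.1 hk)).1 rfl

theorem Run.nil_inv {v K} (h : Run [] v K) : v = [] ∧ K = [] := by
  rcases h.inv with ⟨rfl, rfl⟩ | ⟨v, K₁, w', hs, -⟩
  · exact ⟨rfl, rfl⟩
  · cases hs

/-- Freeness makes every execution under a finitely supported interpretation terminate: each
iteration of a loop uses up a new true predicate term. -/
theorem exists_agr_run {S : Schema} (hS : Special S) (A : Finset (ℕ × List Trm)) (T : Schema) :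
    ∀ K H, Run [S] H (T :: K) → agr A H → ∃ w, Run (T :: K) w K ∧ agr A (H ++ w) := by
  induction T with
  | skip => intro K H _ ha; exact ⟨[], (Step.skip K).run, by simpa using ha⟩
  | assign y f l a =>
    intro K H _ ha
    exact ⟨_, (Step.asn y f l a K).run, ha.snoc_asn _ _ _ _⟩
  | seq a b iha ihb =>
    intro K H hr ha
    have hr' := hr.trans (Step.seq a b K).run
    rw [List.append_nil] at hr'
    obtain ⟨w, h1, h2⟩ := iha _ _ hr' ha
    obtain ⟨w', h1', h2'⟩ := ihb _ _ (hr'.trans h1) h2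
    exact ⟨w ++ w', (Run.step (.seq a b K) (h1.trans h1') :), by simpa using h2'⟩
  | ite p l a t e iht ihe =>
    intro K H hr ha
    by_cases hk : (p, a.map (ex eSt H)) ∈ A
    · have hs := Step.iteT p l a t e K
      obtain ⟨w, h1, h2⟩ := iht _ _ (hr.trans hs.run) (ha.snoc_prd (by simpa using hk))
      exact ⟨_, .step hs h1, by simpa using h2⟩
    · have hs := Step.iteF p l a t e K
      obtain ⟨w, h1, h2⟩ := ihe _ _ (hr.trans hs.run) (ha.snoc_prd (by simpa using hk))
      exact ⟨_, .step hs h1, by simpa using h2⟩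
  | whil p l a B ih =>
    intro K H
    induction hn : (A \ tset eSt H).card using Nat.strong_induction_on generalizing H with
    | _ n ihn =>
    subst hn
    intro hr ha
    by_cases hk : (p, a.map (ex eSt H)) ∈ A
    · have hs := Step.whT p l a B K
      have hr' := hr.trans hs.run
      obtain ⟨w, h1, h2⟩ := ih _ _ hr' (ha.snoc_prd (by simpa using hk))
      have hlt : (A \ tset eSt (H ++ [.prd p l a true] ++ w)).card <
          (A \ tset eSt H).card := by
        apply Finset.card_lt_card
        refine ⟨fun k hk => ?_, fun hsub => ?_⟩
        · rw [Finset.mem_sdiff] at hk ⊢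
          exact ⟨hk.1, fun h => hk.2 (by
            rw [List.append_assoc, tset_append]; exact Finset.mem_union_left _ h)⟩
        · have hnd := dec_nodup hS hr'
          have hnot : (p, a.map (ex eSt H)) ∉ tset eSt H := by
            intro hin
            simp only [dec_append, dec, List.map_append, List.map_cons, List.map_nil] at hnd
            exact (List.nodup_append.1 hnd).2.2 _
              (List.mem_map.2 ⟨_, mem_tset.1 hin, rfl⟩) _ (List.mem_singleton_self _) rfl
          have := hsub (Finset.mem_sdiff.2 ⟨hk, hnot⟩)
          refine (Finset.mem_sdiff.1 this).2 (mem_tset.2 ?_)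
          rw [dec_append, dec_append]
          simp [dec]
      obtain ⟨w', h1', h2'⟩ := ihn _ hlt _ rfl (hr'.trans h1) h2
      exact ⟨_, .step hs (h1.trans h1'), by simpa using h2'⟩
    · exact ⟨_, (Step.whF p l a B K).run, ha.snoc_prd (by simpa using hk)⟩

/-- The complete path executed under the interpretation with true predicate terms `A`. -/
noncomputable def runOf (S : Schema) (A : Finset (ℕ × List Trm)) : List Letter :=
  Classical.epsilon fun σ => Run [S] σ [] ∧ agr A σ

theorem runOf_spec {S : Schema} (hS : Special S) (A : Finset (ℕ × List Trm)) :
    Run [S] (runOf S A) [] ∧ agr A (runOf S A) := by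
  have : ∃ σ, Run [S] σ [] ∧ agr A σ := by
    obtain ⟨w, h1, h2⟩ := exists_agr_run hS A S [] [] (.nil _) (agr_nil A)
    exact ⟨w, h1, h2⟩
  exact Classical.epsilon_spec this

theorem Run.eq_of_prefix {K w w' K'} (h : Run K w []) (h' : Run K w' K') (hp : w <+: w') :
    w = w' := by
  obtain ⟨v, rfl⟩ := hp
  obtain ⟨z, h''⟩ := h'.complete
  rw [List.append_assoc] at h''
  have := (h.residual h'').nil_inv.1
  rw [(List.append_eq_nil_iff.1 this).1, List.append_nil]

theorem prefix_runOf {S : Schema} (hS : Special S) {A : Finset (ℕ × List Trm)} {w K}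
    (h : Run [S] w K) (ha : agr A w) : w <+: runOf S A := by
  obtain ⟨h1, h2⟩ := runOf_spec hS A
  rcases h.diverge h1 with h3 | h3 | ⟨τ, p, l, a, b, h3, h4⟩
  · exact h3
  · rw [h1.eq_of_prefix h h3]
  · have e1 := ha.prd h3
    have e2 := h2.prd h4
    rw [← e1] at e2
    cases b <;> simp at e2

theorem runOf_eq {S : Schema} (hS : Special S) {A : Finset (ℕ × List Trm)} {w}
    (h : Run [S] w []) (ha : agr A w) : runOf S A = w :=
  (h.eq_of_prefix (runOf_spec hS A).1 (prefix_runOf hS h ha)).symm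

/-- The final value of `u` under the interpretation with true predicate terms `A`. -/
noncomputable def fval (S : Schema) (u : ℕ) (A : Finset (ℕ × List Trm)) : Trm :=
  ex eSt (runOf S A) u

/-- The predicate symbol `q` is relevant to `u`: flipping the value of a single predicate term
of `q` can change the final value of `u`. -/
def Rel (S : Schema) (u q : ℕ) : Prop :=
  ∃ A s, (q, s) ∉ A ∧ fval S u A ≠ fval S u (insert (q, s) A)

open Classical in
/-- The part of a set of predicate terms whose predicate symbols satisfy `R`. -/
noncomputable def rpart (R : ℕ → Prop) (A : Finset (ℕ × List Trm)) : Finset (ℕ × List Trm) :=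
  A.filter fun k => R k.1

theorem mem_rpart {R : ℕ → Prop} {A : Finset (ℕ × List Trm)} {k : ℕ × List Trm} :
    k ∈ rpart R A ↔ k ∈ A ∧ R k.1 := by simp [rpart]

theorem fval_union {S : Schema} {u : ℕ} (A B : Finset (ℕ × List Trm))
    (hB : ∀ k ∈ B, ¬ Rel S u k.1) : fval S u (A ∪ B) = fval S u A := by
  induction B using Finset.induction_on with
  | empty => simp
  | insert k B hk ih =>
    have ih := ih fun k hk => hB k (Finset.mem_insert_of_mem hk)
    rw [Finset.union_insert]
    by_cases hm : k ∈ A ∪ B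
    · rw [Finset.insert_eq_of_mem hm, ih]
    · by_contra hne
      exact hB k (Finset.mem_insert_self _ _)
        ⟨A ∪ B, k.2, hm, fun e => hne (by rw [← ih]; exact e.symm)⟩

/-- Only the relevant predicate terms matter for the final value of `u`. -/
theorem fval_congr {S : Schema} {u : ℕ} {A A' : Finset (ℕ × List Trm)}
    (h : rpart (Rel S u) A = rpart (Rel S u) A') : fval S u A = fval S u A' := by
  have key : ∀ A, fval S u A = fval S u (rpart (Rel S u) A) := by
    intro A
    have hA : A = rpart (Rel S u) A ∪ rpart (fun q => ¬ Rel S u q) A := by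
      ext k; rw [Finset.mem_union, mem_rpart, mem_rpart]; tauto
    conv_lhs => rw [hA]
    exact fval_union _ _ fun k hk => (mem_rpart.1 hk).2
  rw [key A, key A', h]

open Classical in
/-- The number of true decisions of predicates in `R` along a word. -/
noncomputable def tl (R : ℕ → Prop) : List Letter → ℕ
  | [] => 0
  | .asn _ _ _ _ :: w => tl R w
  | .prd p _ _ b :: w => (if b = true ∧ R p then 1 else 0) + tl R w

theorem tl_append (R : ℕ → Prop) (w w' : List Letter) : tl R (w ++ w') = tl R w + tl R w' := by
  induction w with
  | nil => simp [tl]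
  | cons c w ih => cases c <;> simp [tl, ih, add_assoc]

theorem tl_eq_zero {R : ℕ → Prop} {w : List Letter} :
    tl R w = 0 ↔ ∀ p l a, Letter.prd p l a true ∈ w → ¬ R p := by
  induction w with
  | nil => simp [tl]
  | cons c w ih =>
    cases c with
    | asn => simpa [tl] using ih
    | prd p l a b =>
      simp only [tl, Nat.add_eq_zero_iff, ih, List.mem_cons, Letter.prd.injEq]
      constructor
      · rintro ⟨h1, h2⟩ p' l' a' (⟨rfl, rfl, rfl, rfl⟩ | h)
        · simpa using h1
        · exact h2 _ _ _ h
      · intro h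
        refine ⟨?_, fun p l a hm => h p l a (.inr hm)⟩
        cases b
        · simp
        · simpa using h p l a (.inl ⟨rfl, rfl, rfl, rfl⟩)

theorem tl_allF {R : ℕ → Prop} {w : List Letter} (h : AllF w) : tl R w = 0 :=
  tl_eq_zero.2 fun p l a hm => absurd hm (h p l a)

theorem rpart_union (R : ℕ → Prop) (A B : Finset (ℕ × List Trm)) :
    rpart R (A ∪ B) = rpart R A ∪ rpart R B := by
  classical exact Finset.filter_union _ A B

theorem rpart_mono (R : ℕ → Prop) {A B : Finset (ℕ × List Trm)} (h : A ⊆ B) :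
    rpart R A ⊆ rpart R B := by
  intro k hk
  rw [mem_rpart] at hk ⊢
  exact ⟨h hk.1, hk.2⟩

theorem rpart_tset_card {R : ℕ → Prop} (w : List Letter) : ∀ d,
    (rpart R (tset d w)).card ≤ tl R w ∧
    (((dec d w).map Prod.fst).Nodup → (rpart R (tset d w)).card = tl R w) := by
  induction w with
  | nil => intro d; simp [tset, dec, tl, rpart]
  | cons c w ih =>
    intro d
    cases c with
    | asn y f l a => exact ih _
    | prd p l a b =>
      obtain ⟨ih1, ih2⟩ := ih d
      simp only [dec, List.map_cons, List.nodup_cons]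
      by_cases hb : b = true ∧ R p
      · have e : rpart R (tset d (.prd p l a b :: w)) =
            insert (p, a.map d) (rpart R (tset d w)) := by
          ext k
          rw [Finset.mem_insert, mem_rpart, mem_rpart, mem_tset, mem_tset, dec, List.mem_cons]
          simp only [Prod.mk.injEq, hb.1, and_true]
          constructor
          · rintro ⟨h1 | h1, h2⟩
            · exact .inl h1
            · exact .inr ⟨h1, h2⟩
          · rintro (rfl | ⟨h1, h2⟩)
            · exact ⟨.inl rfl, hb.2⟩
            · exact ⟨.inr h1, h2⟩
        simp only [tl, if_pos hb, e]
        refine ⟨(Finset.card_insert_le _ _).trans (by omega), fun ⟨h1, h2⟩ => ?_⟩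
        rw [Finset.card_insert_of_notMem, ih2 h2, add_comm]
        intro hm
        exact h1 (List.mem_map.2 ⟨_, mem_tset.1 (mem_rpart.1 hm).1, rfl⟩)
      · have e : rpart R (tset d (.prd p l a b :: w)) = rpart R (tset d w) := by
          ext k
          rw [mem_rpart, mem_rpart, mem_tset, mem_tset, dec, List.mem_cons]
          simp only [Prod.mk.injEq]
          constructor
          · rintro ⟨⟨rfl, h1⟩ | h1, h2⟩
            · exact absurd ⟨h1.symm, h2⟩ hb
            · exact ⟨h1, h2⟩
          · rintro ⟨h1, h2⟩; exact ⟨.inr h1, h2⟩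
        simp only [tl, if_neg hb, e, zero_add]
        exact ⟨ih1, fun ⟨_, h2⟩ => ih2 h2⟩

end SchemaSlicing

namespace SchemaSlicing

/-! ### Couples and their tails -/

theorem key_inj {S : Schema} (hS : Special S) {H β₁ β₂ : List Letter} {K₁ K₂}
    (h₁ : Run [S] (H ++ β₁) K₁) (h₂ : Run [S] (H ++ β₂) K₂) {t₁ t₂ : ℕ × List Trm} {b₁ b₂}
    (m₁ : (t₁, b₁) ∈ dec eSt β₁) (m₂ : (t₂, b₂) ∈ dec eSt β₂)
    (e : skey (ex eSt H) t₁ = skey (ex eSt H) t₂) : t₁ = t₂ := by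
  obtain ⟨τ₁, p₁, l₁, a₁, c₁, ω₁, rfl, e₁⟩ := mem_dec.1 m₁
  obtain ⟨τ₂, p₂, l₂, a₂, c₂, ω₂, rfl, e₂⟩ := mem_dec.1 m₂
  obtain ⟨rfl, rfl⟩ := Prod.mk.inj e₁
  obtain ⟨rfl, rfl⟩ := Prod.mk.inj e₂
  simp only [skey, ← map_ex_eq_sub, Prod.mk.injEq] at e
  obtain ⟨rfl, e⟩ := e
  rw [← List.append_assoc] at h₁ h₂
  obtain ⟨_, h₁'⟩ := h₁.prefix
  obtain ⟨_, h₂'⟩ := h₂.prefix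
  rw [exchange_map hS h₁' h₂' e eSt]

theorem mem_dec_skey {d : ℕ → Trm} {w : List Letter} {t b} (h : (t, b) ∈ dec eSt w) :
    (skey d t, b) ∈ dec d w := by
  rw [dec_eq_map]; exact List.mem_map.2 ⟨_, h, rfl⟩

theorem exists_of_mem_dec {d : ℕ → Trm} {w : List Letter} {k b} (h : (k, b) ∈ dec d w) :
    ∃ t, (t, b) ∈ dec eSt w ∧ skey d t = k := by
  rw [dec_eq_map] at h
  obtain ⟨⟨t, b'⟩, h1, h2⟩ := List.mem_map.1 h
  obtain ⟨rfl, rfl⟩ := Prod.mk.inj h2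
  exact ⟨t, h1, rfl⟩

/-- A key decided in the first part of a path is not met again in the second part. -/
theorem dec_disj {S : Schema} (hS : Special S) {H β : List Letter} {K} (h : Run [S] (H ++ β) K)
    {k b b'} (h1 : (k, b) ∈ dec eSt H) (h2 : (k, b') ∈ dec (ex eSt H) β) : False := by
  have hn := dec_nodup hS h
  rw [dec_append, List.map_append] at hn
  exact (List.nodup_append.1 hn).2.2 _ (List.mem_map.2 ⟨_, h1, rfl⟩) _
    (List.mem_map.2 ⟨_, h2, rfl⟩) rfl

/-- A key met at a predicate letter is not met again later. -/
theorem dec_disj_head {S : Schema} (hS : Special S) {H β : List Letter} {K q l a b b'}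
    (h : Run [S] (H ++ .prd q l a b :: β) K)
    (h2 : ((q, a.map (ex eSt H)), b') ∈ dec (ex eSt H) β) : False := by
  have h' : Run [S] ((H ++ [.prd q l a b]) ++ β) K := by simpa using h
  refine dec_disj hS h' (k := (q, a.map (ex eSt H))) (b := b) (b' := b') ?_ ?_
  · simp [dec_append, dec]
  · simpa [ex_append] using h2

/-- A key met before a predicate letter differs from the key of that letter. -/
theorem dec_disj_last {S : Schema} (hS : Special S) {H β : List Letter} {K q l a b b'}
    (h : Run [S] (H ++ .prd q l a b :: β) K)
    (h2 : ((q, a.map (ex eSt H)), b') ∈ dec eSt H) : False :=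
  dec_disj hS h (b' := b) h2 (by simp [dec])

theorem agr_tset {S : Schema} (hS : Special S) {w : List Letter} {K} (h : Run [S] w K) :
    agr (tset eSt w) w := by
  intro k b hk
  rw [mem_tset]
  exact ⟨fun e => e ▸ hk, fun h' => key_unique (dec_nodup hS h) hk h'⟩

theorem tset_allF {d : ℕ → Trm} {w : List Letter} (h : AllF w) : tset d w = ∅ := by
  rw [Finset.eq_empty_iff_forall_notMem]
  intro k hk
  obtain ⟨τ, p, l, a, b, τ', rfl, e⟩ := mem_dec.1 (mem_tset.1 hk)
  obtain ⟨-, rfl⟩ := Prod.mk.inj e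
  exact h p l a (by simp)

/-- The two tails of a couple for the predicate symbol `q` that changes the final value of `u`:
they continue some common head, make no contradictory decisions when started from the natural
state, and give different values to `u`. -/
def Tails (S : Schema) (u q : ℕ) (ρt ρf : List Letter) : Prop :=
  (∃ H l a, Run [S] (H ++ .prd q l a true :: ρt) [] ∧ Run [S] (H ++ .prd q l a false :: ρf) []) ∧
  (∀ t b, (t, b) ∈ dec eSt ρt → (t, !b) ∉ dec eSt ρf) ∧ ex eSt ρt u ≠ ex eSt ρf u

/-- The number of relevant predicate terms made true along the two tails. -/
noncomputable def tc (S : Schema) (u : ℕ) (ρt ρf : List Letter) : ℕ :=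
  (rpart (Rel S u) (tset eSt ρt ∪ tset eSt ρf)).card

theorem rpart_image (R : ℕ → Prop) (d : ℕ → Trm) (W : Finset (ℕ × List Trm)) :
    rpart R (W.image (skey d)) = (rpart R W).image (skey d) := by
  ext k
  simp only [mem_rpart, Finset.mem_image]
  constructor
  · rintro ⟨⟨t, h1, rfl⟩, h2⟩; exact ⟨t, ⟨h1, h2⟩, rfl⟩
  · rintro ⟨t, ⟨h1, h2⟩, rfl⟩; exact ⟨⟨t, h1, rfl⟩, h2⟩

/-- Any pair of interpretations differing at one predicate term and giving different values to
`u` decomposes into a head and a pair of tails. -/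
theorem couple_tails {S : Schema} (hS : Special S) {u : ℕ} {A : Finset (ℕ × List Trm)} {q s}
    (hx : (q, s) ∉ A) (hne : fval S u A ≠ fval S u (insert (q, s) A)) :
    ∃ H l a ρt ρf, runOf S A = H ++ .prd q l a false :: ρf ∧
      runOf S (insert (q, s) A) = H ++ .prd q l a true :: ρt ∧ a.map (ex eSt H) = s ∧
      Tails S u q ρt ρf ∧ tl (Rel S u) H + tc S u ρt ρf ≤ (rpart (Rel S u) A).card := by
  obtain ⟨r0, a0⟩ := runOf_spec hS A
  obtain ⟨r1, a1⟩ := runOf_spec hS (insert (q, s) A)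
  rcases r0.diverge r1 with h | h | ⟨H, p, l, a, b, h0, h1⟩
  · exact absurd (by rw [fval, fval, r0.eq_of_prefix r1 h]) hne
  · exact absurd (by rw [fval, fval, r1.eq_of_prefix r0 h]) hne
  have e0 := a0.prd h0
  have e1 := a1.prd h1
  rw [Finset.mem_insert] at e1
  obtain ⟨rfl, hk⟩ : b = false ∧ (p, a.map (ex eSt H)) = (q, s) := by
    cases b
    · simp only [Bool.not_false, true_iff] at e1
      simp only [Bool.false_eq_true, false_iff] at e0
      exact ⟨rfl, e1.resolve_right e0⟩
    · simp only [Bool.not_true, Bool.false_eq_true, false_iff] at e1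
      exact absurd (.inr (e0.1 rfl)) e1
  obtain ⟨rfl, hs⟩ := Prod.mk.inj hk
  obtain ⟨ρf, hf⟩ := h0
  obtain ⟨ρt, ht⟩ := h1
  rw [List.append_assoc, List.singleton_append] at hf ht
  rw [Bool.not_false] at ht
  have hfv : fval S u A = ex (ex eSt H) ρf u := by rw [fval, ← hf, ex_append]; rfl
  have htv : fval S u (insert (p, s) A) = ex (ex eSt H) ρt u := by
    rw [fval, ← ht, ex_append]; rfl
  rw [← hf] at r0 a0
  rw [← ht] at r1 a1
  -- membership of the decisions along the tails, after the head
  have mf : ∀ k b, (k, b) ∈ dec (ex eSt H) ρf → (b = true ↔ k ∈ A) ∧ k ≠ (p, s) := by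
    intro k b hkb
    refine ⟨a0 k b ?_, ?_⟩
    · rw [dec_append]; simp [dec, hkb]
    · rintro rfl; rw [← hs] at hkb; exact dec_disj_head hS r0 hkb
  have mt : ∀ k b, (k, b) ∈ dec (ex eSt H) ρt → (b = true ↔ k ∈ A) ∧ k ≠ (p, s) := by
    intro k b hkb
    have hk' : k ≠ (p, s) := by
      rintro rfl; rw [← hs] at hkb; exact dec_disj_head hS r1 hkb
    refine ⟨(a1 k b ?_).trans ?_, hk'⟩
    · rw [dec_append]; simp [dec, hkb]
    · simp [hk']
  refine ⟨H, l, a, ρt, ρf, hf.symm, ht.symm, hs, ⟨⟨H, l, a, r1, r0⟩, ?_, ?_⟩, ?_⟩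
  · intro t b htb htb'
    have := (mt _ _ (mem_dec_skey htb)).1.trans (mf _ _ (mem_dec_skey htb')).1.symm
    cases b <;> simp at this
  · intro e
    exact hne (by rw [hfv, htv, ex_eq_sub, ex_eq_sub (ex eSt H) ρt, e])
  · set R := Rel S u
    set W := tset eSt ρt ∪ tset eSt ρf with hW
    have hinj : Set.InjOn (skey (ex eSt H)) (rpart R W) := by
      have g : ∀ t ∈ W, ∃ β b, (∃ K, Run [S] (H ++ .prd p l a b :: β) K) ∧
          (t, true) ∈ dec eSt β := by
        intro t htW
        rcases Finset.mem_union.1 htW with h | h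
        · exact ⟨ρt, _, ⟨_, r1⟩, mem_tset.1 h⟩
        · exact ⟨ρf, _, ⟨_, r0⟩, mem_tset.1 h⟩
      intro t₁ h₁ t₂ h₂ e
      obtain ⟨β₁, b₁, ⟨K₁, hr₁⟩, hm₁⟩ := g t₁ (mem_rpart.1 h₁).1
      obtain ⟨β₂, b₂, ⟨K₂, hr₂⟩, hm₂⟩ := g t₂ (mem_rpart.1 h₂).1
      exact key_inj hS hr₁ hr₂ (b₁ := true) (b₂ := true) (by simp [dec, hm₁])
        (by simp [dec, hm₂]) e
    have hc : tc S u ρt ρf = (rpart R (W.image (skey (ex eSt H)))).card := by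
      rw [rpart_image, Finset.card_image_of_injOn hinj]; rfl
    obtain ⟨_, rH⟩ := r0.prefix
    have hH : tl R H = (rpart R (tset eSt H)).card :=
      ((rpart_tset_card H eSt).2 (dec_nodup hS rH)).symm
    have him : W.image (skey (ex eSt H)) =
        tset (ex eSt H) ρt ∪ tset (ex eSt H) ρf := by
      rw [hW, Finset.image_union, ← tset_eq_image, ← tset_eq_image]
    rw [hc, hH, him, ← Finset.card_union_of_disjoint, ← rpart_union]
    · refine Finset.card_le_card (rpart_mono R ?_)
      intro k hk
      rcases Finset.mem_union.1 hk with hk | hk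
      · exact a0.left.tset_subset hk
      · rcases Finset.mem_union.1 hk with hk | hk
        · exact (mt k true (mem_tset.1 hk)).1.1 rfl
        · exact (mf k true (mem_tset.1 hk)).1.1 rfl
    · rw [Finset.disjoint_left]
      intro k h1 h2
      have h1 := mem_tset.1 (mem_rpart.1 h1).1
      rcases Finset.mem_union.1 (mem_rpart.1 h2).1 with h2 | h2
      · exact dec_disj hS r1 h1 (b' := true) (by simp [dec, mem_tset.1 h2])
      · exact dec_disj hS r0 h1 (b' := true) (by simp [dec, mem_tset.1 h2])

theorem agr_couple_aux {S : Schema} (hS : Special S) {H ρ₁ ρ₂ : List Letter} {q l a b₁ b₂}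
    (h₁ : Run [S] (H ++ .prd q l a b₁ :: ρ₁) []) (h₂ : Run [S] (H ++ .prd q l a b₂ :: ρ₂) [])
    (hc : ∀ t b, (t, b) ∈ dec eSt ρ₁ → (t, !b) ∉ dec eSt ρ₂) {k b}
    (hk : (k, b) ∈ dec eSt (H ++ .prd q l a b₁ :: ρ₁)) (hne : k ≠ (q, a.map (ex eSt H))) :
    b = true ↔ k ∈ tset eSt H ∪ (tset (ex eSt H) ρ₁ ∪ tset (ex eSt H) ρ₂) := by
  simp only [Finset.mem_union, mem_tset]
  have hk' := hk
  simp only [dec_append, dec, List.mem_append, List.mem_cons, Prod.mk.injEq] at hk'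
  constructor
  · rintro rfl
    rcases hk' with h | h | h
    · exact .inl h
    · exact absurd h.1 hne
    · exact .inr (.inl h)
  · rintro (h | h | h)
    · exact key_unique (dec_nodup hS h₁) hk (by simp [dec_append, h])
    · exact key_unique (dec_nodup hS h₁) hk (by simp [dec_append, dec, h])
    · rcases hk' with h' | h' | h'
      · exact (dec_disj hS h₂ h' (b' := true) (by simp [dec, h])).elim
      · exact absurd h'.1 hne
      · obtain ⟨t₁, m₁, e₁⟩ := exists_of_mem_dec h'
        obtain ⟨t₂, m₂, e₂⟩ := exists_of_mem_dec h
        obtain rfl := key_inj hS h₁ h₂ (b₁ := b) (b₂ := true) (t₁ := t₁) (t₂ := t₂)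
          (by simp [dec, m₁]) (by simp [dec, m₂]) (e₁.trans e₂.symm)
        cases b
        · exact absurd m₂ (hc _ _ m₁)
        · rfl

/-- A pair of tails can be attached to every head that reaches the predicate. -/
theorem tails_couple {S : Schema} (hS : Special S) {u q : ℕ} {ρt ρf : List Letter}
    (ht : Tails S u q ρt ρf) {H l a Z K} (h : Run [S] (H ++ [.prd q l a Z]) K) :
    ∃ A, (q, a.map (ex eSt H)) ∉ A ∧ runOf S A = H ++ .prd q l a false :: ρf ∧
      runOf S (insert (q, a.map (ex eSt H)) A) = H ++ .prd q l a true :: ρt ∧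
      fval S u A ≠ fval S u (insert (q, a.map (ex eSt H)) A) ∧
      (rpart (Rel S u) A).card ≤ tl (Rel S u) H + tc S u ρt ρf := by
  obtain ⟨⟨H₀, l₀, a₀, h1, h0⟩, hc, hne⟩ := ht
  obtain ⟨rfl, rfl⟩ := h1.same_prd hS h
  have h1 := h1.splice hS.1 h rfl
  have h0 := h0.splice hS.1 h rfl
  set x := (q, a₀.map (ex eSt H)) with hx
  set A := tset eSt H ∪ (tset (ex eSt H) ρt ∪ tset (ex eSt H) ρf) with hA
  have hxA : x ∉ A := by
    simp only [hA, Finset.mem_union, mem_tset]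
    rintro (h' | h' | h')
    · exact dec_disj_last hS h0 h'
    · exact dec_disj_head hS h1 h'
    · exact dec_disj_head hS h0 h'
  have g1 : agr (insert x A) (H ++ .prd q l₀ a₀ true :: ρt) := by
    intro k b hk
    by_cases hkx : k = x
    · subst hkx
      have := key_unique (dec_nodup hS h1) hk (b' := true) (by simp [dec_append, dec, hx])
      simp [this]
    · rw [agr_couple_aux hS h1 h0 hc hk hkx, Finset.mem_insert, ← hA]
      simp [hkx]
  have g0 : agr A (H ++ .prd q l₀ a₀ false :: ρf) := by
    intro k b hk
    by_cases hkx : k = x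
    · subst hkx
      have := key_unique (dec_nodup hS h0) hk (b' := false) (by simp [dec_append, dec, hx])
      simp [this, hxA]
    · rw [agr_couple_aux hS h0 h1 (fun t b m m' => hc t (!b) m' (by simpa using m)) hk hkx, hA,
        Finset.union_comm (tset (ex eSt H) ρt)]
  have e0 := runOf_eq hS h0 g0
  have e1 := runOf_eq hS h1 g1
  refine ⟨A, hxA, e0, e1, ?_, ?_⟩
  · rw [fval, fval, e0, e1, ex_append, ex_append, ex_prd, ex_prd]
    intro e
    refine hne ?_
    exact (exchange hS (β₁ := .prd q l₀ a₀ false :: ρf) (β₂ := .prd q l₀ a₀ true :: ρt) h0 h1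
      (by simpa using e) eSt).symm
  · rw [hA, rpart_union]
    refine (Finset.card_union_le _ _).trans (Nat.add_le_add (rpart_tset_card H eSt).1 ?_)
    rw [tset_eq_image, tset_eq_image _ ρf, ← Finset.image_union, rpart_image]
    exact Finset.card_image_le

theorem Rel.exists_tails {S : Schema} (hS : Special S) {u q : ℕ} (h : Rel S u q) :
    ∃ ρt ρf, Tails S u q ρt ρf := by
  obtain ⟨A, s, hx, hne⟩ := h
  obtain ⟨H, l, a, ρt, ρf, -, -, -, ht, -⟩ := couple_tails hS hx hne
  exact ⟨ρt, ρf, ht⟩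

theorem Tails.rel {S : Schema} (hS : Special S) {u q : ℕ} {ρt ρf} (h : Tails S u q ρt ρf) :
    Rel S u q := by
  obtain ⟨H, l, a, h1, h0⟩ := h.1
  have h1 : Run [S] ((H ++ [.prd q l a true]) ++ ρt) [] := by simpa using h1
  obtain ⟨K, h'⟩ := h1.prefix
  obtain ⟨A, hx, -, -, hne, -⟩ := tails_couple hS h h'
  exact ⟨A, _, hx, hne⟩

/-! ### Loops without true decisions -/

/-- A loop along which all decisions are false contradicts freeness: under a finitely supported
interpretation it would be iterated forever. -/
theorem no_loop {S : Schema} (hS : Special S) {H δ : List Letter} {q l a Z K}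
    (h : Run [S] (H ++ (.prd q l a false :: δ) ++ [.prd q l a Z]) K) (hδ : AllF δ) : False := by
  obtain ⟨K₂, K₂', h3, h4, -⟩ := h.at_letter rfl
  obtain ⟨K₁, K₁', h1, g2, g3⟩ := h3.at_letter rfl
  obtain rfl := h1.same_state hS.1 g2 h3 h4 rfl
  have h2 : Run K₁ (.prd q l a false :: δ) K₁ := Run.step g2 g3
  have hn : ∀ n : ℕ, ∃ β, Run K₁ β K₁ ∧ AllF β ∧ n ≤ β.length := by
    intro n
    induction n with
    | zero => exact ⟨[], .nil _, .nil, by simp⟩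
    | succ n ih =>
      obtain ⟨β, r, f, e⟩ := ih
      exact ⟨β ++ .prd q l a false :: δ, r.trans h2, f.append (hδ.cons_prd q l a), by
        rw [List.length_append, List.length_cons]; omega⟩
  obtain ⟨β, r, f, e⟩ := hn ((runOf S (tset eSt H)).length + 1)
  have hr := h1.trans r
  have ha := agr_tset hS hr
  rw [tset_append, tset_allF f, Finset.union_empty] at ha
  have := (prefix_runOf hS hr ha).length_le
  rw [List.length_append] at this
  omega

end SchemaSlicing

namespace SchemaSlicing

/-! ### Predicates controlled by an irrelevant predicate are irrelevant -/

open Classical in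
/-- The relevant predicate terms of `A`, together with the irrelevant ones of `B`. -/
noncomputable def mix (S : Schema) (u : ℕ) (A B : Finset (ℕ × List Trm)) :
    Finset (ℕ × List Trm) :=
  rpart (Rel S u) A ∪ rpart (fun q => ¬ Rel S u q) B

theorem mem_mix {S : Schema} {u : ℕ} {A B : Finset (ℕ × List Trm)} {k : ℕ × List Trm} :
    k ∈ mix S u A B ↔ k ∈ A ∧ Rel S u k.1 ∨ k ∈ B ∧ ¬ Rel S u k.1 := by
  rw [mix, Finset.mem_union, mem_rpart, mem_rpart]

theorem mem_mix_rel {S : Schema} {u : ℕ} {A B : Finset (ℕ × List Trm)} {k : ℕ × List Trm}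
    (h : Rel S u k.1) : k ∈ mix S u A B ↔ k ∈ A := by simp [mem_mix, h]

theorem mem_mix_not_rel {S : Schema} {u : ℕ} {A B : Finset (ℕ × List Trm)} {k : ℕ × List Trm}
    (h : ¬ Rel S u k.1) : k ∈ mix S u A B ↔ k ∈ B := by simp [mem_mix, h]

theorem rpart_mix (S : Schema) (u : ℕ) (A B : Finset (ℕ × List Trm)) :
    rpart (Rel S u) (mix S u A B) = rpart (Rel S u) A := by
  ext k; rw [mem_rpart, mem_rpart, mem_mix]; tauto

theorem rpart_insert_mix (S : Schema) (u : ℕ) (A B : Finset (ℕ × List Trm)) (x : ℕ × List Trm) :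
    rpart (Rel S u) (insert x (mix S u A B)) = rpart (Rel S u) (insert x A) := by
  ext k; rw [mem_rpart, mem_rpart, Finset.mem_insert, Finset.mem_insert, mem_mix]; tauto

/-- A couple stays a couple when the irrelevant part of the interpretation is replaced. -/
theorem couple_mix {S : Schema} {u : ℕ} {A : Finset (ℕ × List Trm)} {x : ℕ × List Trm}
    (B : Finset (ℕ × List Trm)) (hR : Rel S u x.1) (hx : x ∉ A)
    (hne : fval S u A ≠ fval S u (insert x A)) :
    x ∉ mix S u A B ∧ fval S u (mix S u A B) ≠ fval S u (insert x (mix S u A B)) := by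
  refine ⟨by rwa [mem_mix_rel hR], ?_⟩
  rwa [fval_congr (rpart_mix S u A B), fval_congr (rpart_insert_mix S u A B x)]

/-- If the irrelevant true terms of an interpretation come from `ν`, then beyond `ν` all irrelevant
predicates are decided negatively, so a continuation `κ` without true relevant decisions has no
true decisions at all. -/
theorem allF_of_mix {S : Schema} (hS : Special S) {u : ℕ} {A : Finset (ℕ × List Trm)}
    {ν κ : List Letter} {K} (h : Run [S] (ν ++ κ) K) (ha : agr (mix S u A (tset eSt ν)) (ν ++ κ))
    (hκ : tl (Rel S u) κ = 0) : AllF κ := by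
  intro p m c hm
  obtain ⟨κ₁, κ₂, rfl⟩ := List.append_of_mem hm
  have hR := tl_eq_zero.1 hκ p m c hm
  have hk : ((p, c.map (ex (ex eSt ν) κ₁)), true) ∈
      dec (ex eSt ν) (κ₁ ++ .prd p m c true :: κ₂) := by simp [dec_append, dec]
  have hk' := (ha _ _ (by rw [dec_append]; exact List.mem_append_right (dec eSt ν) hk)).1 rfl
  rw [mem_mix_not_rel hR, mem_tset] at hk'
  exact dec_disj hS h hk' hk

/-- A predicate `r` met on one side of an irrelevant predicate `p`, but avoidable on the other
side, is irrelevant. Otherwise, attach tails for `r` with as few true relevant terms as possible to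
a head passing `p` on the side of `r`. As `p` is irrelevant, the resulting couple survives when `p`
is decided the other way, and by minimality it then meets `r` after a word `κ` without true
decisions. This word first crosses the other side, so its remainder, spliced after the first
occurrence of `r`, gives a path that meets `r` twice without a true decision in between, against
`no_loop`. -/
theorem not_rel_child {S : Schema} (hS : Special S) {u p : ℕ} (hp : ¬ Rel S u p)
    {μ Kp m c Z N₁ N₂} (hμ : Run [S] μ Kp) (s₁ : Step Kp [.prd p m c Z] N₁)
    (s₂ : Step Kp [.prd p m c !Z] N₂) {η KQ} (hη : Run N₁ η KQ) (fη : AllF η)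
    {r l a δ K} (hδ : Run KQ (.prd r l a false :: δ) K) (fδ : AllF δ)
    {α} (hα : Run N₂ α K) (fα : AllF α) (hrα : ∀ l a b, Letter.prd r l a b ∉ α) :
    ¬ Rel S u r := by
  intro hr
  have hrp : r ≠ p := fun e => hp (e ▸ hr)
  obtain ⟨ρt, ρf, ht, hmin⟩ : ∃ ρt ρf, Tails S u r ρt ρf ∧
      ∀ ρt' ρf', Tails S u r ρt' ρf' → tc S u ρt ρf ≤ tc S u ρt' ρf' := by
    classical
    have hex : ∃ n ρt ρf, Tails S u r ρt ρf ∧ tc S u ρt ρf = n := by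
      obtain ⟨ρt, ρf, h⟩ := hr.exists_tails hS
      exact ⟨_, ρt, ρf, h, rfl⟩
    obtain ⟨ρt, ρf, h1, h2⟩ := Nat.find_spec hex
    exact ⟨ρt, ρf, h1, fun ρt' ρf' h' => h2 ▸ Nat.find_min' hex ⟨ρt', ρf', h', rfl⟩⟩
  set H := μ ++ (Letter.prd p m c Z :: η) with hH
  have rQ : Run [S] H KQ := hμ.trans (Run.step s₁ hη)
  obtain ⟨_, hδ1⟩ := (show Run KQ ([.prd r l a false] ++ δ) K from hδ).prefix
  have rH : Run [S] (H ++ [.prd r l a false]) _ := rQ.trans hδ1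
  obtain ⟨A, hx, e0, e1, hne, hcard⟩ := tails_couple hS ht rH
  set s := a.map (ex eSt H) with hs
  have tlH : tl (Rel S u) H = tl (Rel S u) μ := by
    rw [hH, tl_append, tl, tl_allF fη]; simp [hp]
  have aA : agr A H := by
    have := (runOf_spec hS A).2
    rw [e0] at this
    exact this.left
  have aμ : agr A μ := agr.left (hH ▸ aA)
  set ν := μ ++ [Letter.prd p m c !Z] with hν
  have rν : Run [S] ν N₂ := hμ.trans s₂.run
  obtain ⟨hxJ, hneJ⟩ := couple_mix (tset eSt ν) (x := (r, s)) hr hx hne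
  set J := mix S u A (tset eSt ν) with hJ
  have aJ : agr J ν := by
    intro k b hk
    by_cases hR : Rel S u k.1
    · rw [hJ, mem_mix_rel hR]
      rw [hν, dec_append] at hk
      simp only [dec, List.mem_append, List.mem_singleton, Prod.mk.injEq] at hk
      rcases hk with hk | ⟨rfl, -⟩
      · exact aμ k b hk
      · exact absurd hR hp
    · rw [hJ, mem_mix_not_rel hR]
      exact agr_tset hS rν k b hk
  obtain ⟨H', l', a', ρt', ρf', f0, f1, hs', ht', hcard'⟩ := couple_tails hS hxJ hneJ
  rw [hJ, rpart_mix] at hcard'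
  have hm := hmin _ _ ht'
  obtain ⟨rJ, aJ'⟩ := runOf_spec hS J
  rw [f0] at rJ aJ'
  have pν : ν <+: H' ++ [.prd r l' a' false] ++ ρf' := by
    have := prefix_runOf hS rν aJ
    rw [f0] at this
    simpa using this
  -- the couple cannot part before the head `ν`
  have hno : ¬ H' ++ [Letter.prd r l' a' false] <+: ν := by
    intro hpre
    have hd := mem_dec_of_prefix (d := eSt) hpre
    rw [hs', hν, dec_append] at hd
    simp only [dec, List.mem_append, List.mem_singleton, Prod.mk.injEq, hrp, false_and,
      or_false] at hd
    refine dec_disj_last hS rH (b' := false) ?_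
    rw [← hs, hH, dec_append]
    exact List.mem_append_left _ hd
  obtain ⟨κ, rfl⟩ : ν <+: H' := by
    rcases List.prefix_or_prefix_of_prefix pν (List.prefix_append _ _) with h | h
    · rcases List.prefix_concat_iff.1 h with h | h
      · exact absurd (h ▸ List.prefix_rfl) hno
      · exact h
    · exact absurd h hno
  have tκ : tl (Rel S u) κ = 0 := by
    rw [tl_append, hν, tl_append] at hcard'
    omega
  have fκ : AllF κ := by
    obtain ⟨_, h'⟩ := rJ.prefix
    exact allF_of_mix hS h' aJ'.left tκ
  have rκ : Run [S] (ν ++ (κ ++ .prd r l' a' false :: ρf')) [] := by simpa using rJ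
  have rκ := rν.residual rκ
  obtain ⟨κ', rfl⟩ : α <+: κ := by
    have g : ∀ b, Letter.prd r l' a' b ∉ α := fun b => hrα _ _ _
    have rκ1 : Run N₂ ((κ ++ [.prd r l' a' false]) ++ ρf') [] := by simpa using rκ
    obtain ⟨_, rκ1⟩ := rκ1.prefix
    rcases rκ1.diverge hα with h | h | ⟨τ, p', m', c', b, h1, h2⟩
    · exact absurd (h.subset (by simp)) (g false)
    · rcases List.prefix_concat_iff.1 h with h | h
      · exact absurd (h ▸ by simp) (g false)
      · exact h
    · cases b
      · exact absurd (h2.subset (by simp)) (fα p' m' c')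
      · have := h1.subset (a := Letter.prd p' m' c' true) (by simp)
        simp only [List.mem_append, List.mem_singleton, Letter.prd.injEq, Bool.true_eq_false,
          and_false, or_false] at this
        exact absurd this (fκ p' m' c')
  rw [List.append_assoc] at rκ
  have rK := hα.residual rκ
  have rfull : Run [S] (H ++ (.prd r l a false :: (δ ++ κ')) ++ .prd r l' a' false :: ρf') [] := by
    have := rQ.trans (hδ.trans rK)
    simpa using this
  obtain ⟨rfl, rfl⟩ := rfull.same_prd hS rH
  have rfull' : Run [S] ((H ++ (.prd r l' a' false :: (δ ++ κ')) ++ [.prd r l' a' false]) ++ ρf')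
      [] := by simpa using rfull
  obtain ⟨_, r'⟩ := rfull'.prefix
  exact no_loop hS r' (fδ.append fun p' m' c' h => fκ p' m' c' (List.mem_append_right _ h))

theorem Site.predCount_le {S K P L} (h : Site S K P L) (q : ℕ) :
    predCount P q ≤ predCount S q := by
  induction h with
  | refl => exact le_rfl
  | _ => simp only [predCount]; omega

/-- `T`, executed before the continuation `M`, is reached without true decisions from one part of
an irrelevant predicate, while the other part of that predicate can be traversed without true
decisions and without meeting the predicates of `T`. -/
def Idle (S : Schema) (u : ℕ) (T : Schema) (M : List Schema) : Prop :=
  ∃ μ Kp p m c Z N₁ N₂ η M₀ K α, ¬ Rel S u p ∧ Run [S] μ Kp ∧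
    Step Kp [.prd p m c Z] N₁ ∧ Step Kp [.prd p m c !Z] N₂ ∧ Run N₁ η (T :: M) ∧ AllF η ∧
    M = M₀ ++ K ∧ Run N₂ α K ∧ AllF α ∧
    ∀ r l', .pr r l' ∈ lsymSet T → ∀ l a b, Letter.prd r l a b ∉ α

theorem Idle.ite {S : Schema} (hS : Special S) {u p l a t e M μ}
    (h : Run [S] μ (.ite p l a t e :: M)) (hp : ¬ Rel S u p) :
    Idle S u t M ∧ Idle S u e M := by
  have hc : ∀ r, predCount t r + predCount e r ≤ 1 := by
    intro r
    have h1 := h.site_of_cons.predCount_le r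
    have h2 := hS.2.1 r
    simp only [predCount] at h1
    omega
  obtain ⟨α, h1, h2, h3⟩ := exists_allF e M
  obtain ⟨β, g1, g2, g3⟩ := exists_allF t M
  refine ⟨⟨μ, _, p, l, a, true, _, _, [], [], M, α, hp, h, .iteT _ _ _ _ _ _, .iteF _ _ _ _ _ _,
    .nil _, .nil, rfl, h1, h2, ?_⟩, ⟨μ, _, p, l, a, false, _, _, [], [], M, β, hp, h,
    .iteF _ _ _ _ _ _, .iteT _ _ _ _ _ _, .nil _, .nil, rfl, g1, g2, ?_⟩⟩
  · intro r l' hr l a b hm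
    have := predCount_pos hr
    have := predCount_pos (lsymOf_mem_of_lett _ (h3 _ hm) : LSym.pr r l ∈ _)
    have := hc r
    omega
  · intro r l' hr l a b hm
    have := predCount_pos hr
    have := predCount_pos (lsymOf_mem_of_lett _ (g3 _ hm) : LSym.pr r l ∈ _)
    have := hc r
    omega

theorem Idle.whil {S : Schema} {u p l a B M μ}
    (h : Run [S] μ (.whil p l a B :: M)) (hp : ¬ Rel S u p) :
    Idle S u B (.whil p l a B :: M) :=
  ⟨μ, _, p, l, a, true, _, _, [], [.whil p l a B], M, [], hp, h, .whT _ _ _ _ _, .whF _ _ _ _ _,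
    .nil _, .nil, rfl, .nil _, .nil, by simp⟩

/-- By induction on `T`, since whatever `T` contains is again idle in the sense of `Idle`. -/
theorem Idle.not_rel {S : Schema} (hS : Special S) {u : ℕ} (T : Schema) : ∀ {M}, Idle S u T M →
    ∀ {r l}, .pr r l ∈ lsymSet T → ¬ Rel S u r := by
  induction T with
  | skip => exact fun _ _ _ h => h.elim
  | assign => intro _ _ _ _ h; cases h
  | seq a b iha ihb =>
    rintro M ⟨μ, Kp, p, m, c, Z, N₁, N₂, η, M₀, K, α, h1, h2, h3, h4, h5, h6, rfl, h8, h9, h10⟩ r l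
      (hr | hr)
    · refine iha ⟨μ, Kp, p, m, c, Z, N₁, N₂, η ++ [], b :: M₀, K, α, h1, h2, h3, h4,
        h5.trans (Step.seq _ _ _).run, by simpa using h6, rfl, h8, h9,
        fun r l' h => h10 r l' (.inl h)⟩ hr
    · obtain ⟨v, hv, fv, -⟩ := exists_allF a (b :: (M₀ ++ K))
      refine ihb ⟨μ, Kp, p, m, c, Z, N₁, N₂, η ++ ([] ++ v), M₀, K, α, h1, h2, h3, h4,
        h5.trans (Run.step (Step.seq _ _ _) hv), by simpa using h6.append fv, rfl, h8, h9,
        fun r l' h => h10 r l' (.inr h)⟩ hr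
  | ite q m' a t e iht ihe =>
    rintro M ⟨μ, Kp, p, m, c, Z, N₁, N₂, η, M₀, K, α, h1, h2, h3, h4, h5, h6, rfl, h8, h9, h10⟩ r l
      hr
    have hq : ¬ Rel S u q := by
      obtain ⟨δ, d1, d2, -⟩ := exists_allF_list (e :: M₀) K
      exact not_rel_child hS h1 h2 h3 h4 h5 h6 (Run.step (.iteF q m' a t e _) d1) d2 h8 h9
        (h10 q m' (.inl rfl))
    obtain ⟨i1, i2⟩ := Idle.ite hS (h2.trans (Run.step h3 h5)) hq
    rcases hr with hr | hr | hr
    · obtain ⟨rfl, -⟩ := LSym.pr.inj hr; exact hq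
    · exact iht i1 hr
    · exact ihe i2 hr
  | whil q m' a B ih =>
    rintro M ⟨μ, Kp, p, m, c, Z, N₁, N₂, η, M₀, K, α, h1, h2, h3, h4, h5, h6, rfl, h8, h9, h10⟩ r l
      hr
    have hq : ¬ Rel S u q := by
      obtain ⟨δ, d1, d2, -⟩ := exists_allF_list M₀ K
      exact not_rel_child hS h1 h2 h3 h4 h5 h6 (Run.step (.whF q m' a B _) d1) d2 h8 h9
        (h10 q m' (.inl rfl))
    have i1 := Idle.whil (h2.trans (Run.step h3 h5)) hq
    rcases hr with hr | hr
    · obtain ⟨rfl, -⟩ := LSym.pr.inj hr; exact hq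
    · exact ih i1 hr

end SchemaSlicing

namespace SchemaSlicing

/-! ### Heads with the same relevant decisions -/

/-- Two heads that lead to the same continuation and make the same relevant decisions. -/
structure Twin (S : Schema) (u : ℕ) (G G' : List Letter) (K : List Schema) : Prop where
  run : Run [S] G K
  run' : Run [S] G' K
  dec_iff : ∀ t b, Rel S u t.1 → ((t, b) ∈ dec eSt G ↔ (t, b) ∈ dec eSt G')

theorem Twin.symm {S u G G' K} (h : Twin S u G G' K) : Twin S u G' G K :=
  ⟨h.run', h.run, fun t b ht => (h.dec_iff t b ht).symm⟩

theorem Twin.rpart_eq {S u G G' K} (h : Twin S u G G' K) :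
    rpart (Rel S u) (tset eSt G) = rpart (Rel S u) (tset eSt G') := by
  ext k
  simp only [mem_rpart, mem_tset]
  constructor
  · rintro ⟨h1, h2⟩; exact ⟨(h.dec_iff _ _ h2).1 h1, h2⟩
  · rintro ⟨h1, h2⟩; exact ⟨(h.dec_iff _ _ h2).2 h1, h2⟩

theorem Twin.tl_eq {S u G G' K} (hS : Special S) (h : Twin S u G G' K) :
    tl (Rel S u) G = tl (Rel S u) G' := by
  rw [← (rpart_tset_card G eSt).2 (dec_nodup hS h.run),
    ← (rpart_tset_card G' eSt).2 (dec_nodup hS h.run'), h.rpart_eq]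

/-- A segment `β` after the twins `G`, `G'` leading to the relevant predicate `r`, with a pair of
tails for `r`, such that the predicate terms of `r` after `G ++ β` and after `G' ++ β` differ. -/
def Conf (S : Schema) (u : ℕ) (G G' : List Letter) (K : List Schema) (r : ℕ)
    (β ρt ρf : List Letter) : Prop :=
  Tails S u r ρt ρf ∧ ∃ l a Z K', Run K (β ++ [.prd r l a Z]) K' ∧
    a.map (ex eSt (G ++ β)) ≠ a.map (ex eSt (G' ++ β))

theorem Conf.symm {S u G G' K r β ρt ρf} (h : Conf S u G G' K r β ρt ρf) :
    Conf S u G' G K r β ρt ρf := by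
  obtain ⟨h1, l, a, Z, K', h2, h3⟩ := h
  exact ⟨h1, l, a, Z, K', h2, h3.symm⟩

/-- `(N, m, n)` is a lexicographic lower bound for the number of true relevant terms along the
segment and the tails, the number along the segment, and the length of the segment. -/
def ConfBound (S : Schema) (u : ℕ) (G G' : List Letter) (K : List Schema) (N m n : ℕ) : Prop :=
  ∀ r β ρt ρf, Conf S u G G' K r β ρt ρf →
    N ≤ tl (Rel S u) β + tc S u ρt ρf ∧ (tl (Rel S u) β + tc S u ρt ρf = N →
      m ≤ tl (Rel S u) β ∧ (tl (Rel S u) β = m → n ≤ β.length))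

theorem exists_confBound {S u G G' K r β ρt ρf} (h : Conf S u G G' K r β ρt ρf) :
    ∃ r β ρt ρf, Conf S u G G' K r β ρt ρf ∧
      ConfBound S u G G' K (tl (Rel S u) β + tc S u ρt ρf) (tl (Rel S u) β) β.length := by
  let f : ℕ × List Letter × List Letter × List Letter → ℕ ×ₗ ℕ ×ₗ ℕ := fun x =>
    toLex (tl (Rel S u) x.2.1 + tc S u x.2.2.1 x.2.2.2,
      toLex (tl (Rel S u) x.2.1, x.2.1.length))
  let C : Set (ℕ × List Letter × List Letter × List Letter) :=
    {x | Conf S u G G' K x.1 x.2.1 x.2.2.1 x.2.2.2}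
  obtain ⟨⟨r₀, β₀, ρt₀, ρf₀⟩, hx, hmin⟩ :=
    WellFounded.has_min (InvImage.wf f wellFounded_lt) C ⟨(r, β, ρt, ρf), h⟩
  refine ⟨r₀, β₀, ρt₀, ρf₀, hx, fun r' β' ρt' ρf' h' => ?_⟩
  have := hmin (r', β', ρt', ρf') h'
  simp only [InvImage, f, not_lt, Prod.Lex.toLex_le_toLex] at this
  omega

theorem agr.congr {A A' : Finset (ℕ × List Trm)} {w : List Letter} (h : agr A w)
    (hA : ∀ k b, (k, b) ∈ dec eSt w → (k ∈ A ↔ k ∈ A')) : agr A' w :=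
  fun k b hk => (h k b hk).trans (hA k b hk)

theorem prefix_of_snoc_prefix {G H : List Letter} {c : Letter} {w : List Letter}
    (hG : G <+: w) (hH : H ++ [c] <+: w) (hno : ¬ H ++ [c] <+: G) : G <+: H := by
  rcases List.prefix_or_prefix_of_prefix hG hH with h | h
  · rcases List.prefix_concat_iff.1 h with h | h
    · exact absurd (h ▸ List.prefix_rfl) hno
    · exact h
  · exact absurd h hno

/-- A couple at a predicate term met after `G ++ β`, where the twins differ, uses at least `N` true
relevant terms besides those of `G`; if it uses no more than that, then `β` has at least `m` true
relevant decisions. -/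
theorem Twin.bound {S u G G' K} (hS : Special S) (hT : Twin S u G G' K) {N m n}
    (hb : ConfBound S u G G' K N m n) {A : Finset (ℕ × List Trm)} (ha : agr A G)
    {r β l a Z K'} (hβ : Run K (β ++ [.prd r l a Z]) K')
    (hd : a.map (ex eSt (G ++ β)) ≠ a.map (ex eSt (G' ++ β)))
    (hx : (r, a.map (ex eSt (G ++ β))) ∉ A)
    (hne : fval S u A ≠ fval S u (insert (r, a.map (ex eSt (G ++ β))) A))
    (hc : (rpart (Rel S u) A).card ≤ tl (Rel S u) G + N) :
    (rpart (Rel S u) A).card = tl (Rel S u) G + N ∧ m ≤ tl (Rel S u) β := by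
  obtain ⟨H, l', a', ρt, ρf, e0, -, hs, ht, hcard⟩ := couple_tails hS hx hne
  have rβ : Run [S] (G ++ β ++ [.prd r l a Z]) K' := by simpa using hT.run.trans hβ
  have r0 := (runOf_spec hS A).1
  have hG := prefix_runOf hS hT.run ha
  rw [e0] at r0 hG
  obtain ⟨rfl, rfl⟩ := r0.same_prd hS rβ
  obtain ⟨ζ, rfl⟩ : G <+: H := by
    refine prefix_of_snoc_prefix hG (c := .prd r l' a' false) ⟨ρf, by simp⟩ fun hp => ?_
    have := mem_dec_of_prefix (d := eSt) hp
    rw [hs] at this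
    exact dec_disj_last hS rβ (by rw [dec_append]; exact List.mem_append_left _ this)
  have rζ : Run [S] (G ++ (ζ ++ [.prd r l' a' false] ++ ρf)) [] := by simpa using r0
  obtain ⟨_, rζ⟩ := (hT.run.residual rζ).prefix
  have hζ : a'.map (ex eSt (G ++ ζ)) ≠ a'.map (ex eSt (G' ++ ζ)) := by
    intro e
    have h1 := r0
    obtain ⟨_, h1⟩ := h1.prefix
    obtain ⟨_, h2⟩ := rβ.prefix
    have := exchange_map hS h1 h2 (a := a') (a' := a')
      (by rw [← ex_append, ← ex_append, hs]) (ex eSt G')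
    rw [← ex_append, ← ex_append] at this
    exact hd (by rw [← this, ← e, hs])
  obtain ⟨b1, b2⟩ := hb r ζ ρt ρf ⟨ht, _, _, _, _, rζ, hζ⟩
  obtain ⟨b3, -⟩ := hb r β ρt ρf ⟨ht, _, _, _, _, hβ, hd⟩
  rw [tl_append] at hcard
  have hN : tl (Rel S u) ζ + tc S u ρt ρf = N := by omega
  have := (b2 hN).1
  exact ⟨by omega, by omega⟩

theorem rpart_insert {R : ℕ → Prop} {A : Finset (ℕ × List Trm)} {x : ℕ × List Trm}
    (hx : R x.1) : rpart R (insert x A) = insert x (rpart R A) := by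
  ext k
  simp only [mem_rpart, Finset.mem_insert]
  constructor
  · rintro ⟨rfl | h, h'⟩
    · exact .inl rfl
    · exact .inr ⟨h, h'⟩
  · rintro (rfl | ⟨h, h'⟩)
    · exact ⟨.inl rfl, hx⟩
    · exact ⟨.inr h, h'⟩

theorem rpart_erase {R : ℕ → Prop} {A : Finset (ℕ × List Trm)} {x : ℕ × List Trm} :
    rpart R (A.erase x) = (rpart R A).erase x := by
  ext k
  simp only [mem_rpart, Finset.mem_erase]
  tauto

/-- Along a minimal couple, the twins agree on every relevant predicate term decided positively
before the couple parts: otherwise that term `y` could be removed from the interpretation, since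
neither removing it alone nor removing it in presence of `x` changes the final value of `u`, and
this would give a smaller couple. -/
theorem Twin.clean {S u G G' K} (hS : Special S) (hT : Twin S u G G' K) {N m n}
    (hb : ConfBound S u G G' K N m n) {A : Finset (ℕ × List Trm)} {q β l a Z K'}
    (hq : Rel S u q) (ha : agr A (G ++ β)) (hβ : Run K (β ++ [.prd q l a Z]) K')
    (hd : a.map (ex eSt (G ++ β)) ≠ a.map (ex eSt (G' ++ β)))
    (hx : (q, a.map (ex eSt (G ++ β))) ∉ A)
    (hne : fval S u A ≠ fval S u (insert (q, a.map (ex eSt (G ++ β))) A))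
    (hc : (rpart (Rel S u) A).card ≤ tl (Rel S u) G + N) (hm : tl (Rel S u) β = m)
    {τ r l' a'} (hr : Rel S u r) (hτ : τ ++ [.prd r l' a' true] <+: β) :
    a'.map (ex eSt (G ++ τ)) = a'.map (ex eSt (G' ++ τ)) := by
  by_contra hd'
  obtain ⟨β', rfl⟩ := hτ
  set x := (q, a.map (ex eSt (G ++ (τ ++ [.prd r l' a' true] ++ β')))) with hxd
  set y := (r, a'.map (ex eSt (G ++ τ))) with hyd
  have rβ := hT.run.trans hβ
  have rτ' : Run K ((τ ++ [.prd r l' a' true]) ++ (β' ++ [.prd q l a Z])) K' := by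
    simpa using hβ
  obtain ⟨Kτ, rτ⟩ := rτ'.prefix
  have hyA : y ∈ A := (ha.prd (τ := G ++ τ) (l := l') ⟨β', by simp⟩).1 rfl
  have hxy : y ≠ x := fun e => hx (e ▸ hyA)
  have hyG : ∀ b, (y, b) ∉ dec eSt G := by
    intro b hb
    have h2 : Run [S] ((G ++ τ) ++ .prd r l' a' true :: []) Kτ := by
      simpa using hT.run.trans rτ
    exact dec_disj_last hS h2 (b' := b) (by rw [dec_append]; exact List.mem_append_left _ hb)
  have hxG : ∀ b, (x, b) ∉ dec eSt G := by
    intro b hb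
    have h2 : Run [S] ((G ++ (τ ++ [.prd r l' a' true] ++ β')) ++ .prd q l a Z :: []) K' := by
      simpa using rβ
    exact dec_disj_last hS h2 (b' := b) (by rw [dec_append]; exact List.mem_append_left _ hb)
  have hAy : insert y (A.erase y) = A := Finset.insert_erase hyA
  have hyR : y ∈ rpart (Rel S u) A := mem_rpart.2 ⟨hyA, hr⟩
  have hpos : 0 < (rpart (Rel S u) A).card := Finset.card_pos.2 ⟨y, hyR⟩
  have hcy : (rpart (Rel S u) (A.erase y)).card = (rpart (Rel S u) A).card - 1 := by
    rw [rpart_erase, Finset.card_erase_of_mem hyR]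
  have agy : agr (A.erase y) G := ha.left.congr fun k b hk => by
    have : k ≠ y := fun e => hyG b (e ▸ hk)
    simp [this]
  have hxy' : x ∉ A.erase y := fun h => hx (Finset.mem_of_mem_erase h)
  have hyxy : y ∉ insert x (A.erase y) := by simp [hxy]
  have hins : insert y (insert x (A.erase y)) = insert x A := by
    rw [Finset.insert_comm, hAy]
  have agxy : agr (insert x (A.erase y)) G := agy.congr fun k b hk => by
    have : k ≠ x := fun e => hxG b (e ▸ hk)
    simp [this]
  have hcxy : (rpart (Rel S u) (insert x (A.erase y))).card = (rpart (Rel S u) A).card := by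
    rw [rpart_insert hq, Finset.card_insert_of_notMem
      (fun h => hxy' (mem_rpart.1 h).1), hcy]
    omega
  -- removing `y` changes nothing without `x`
  have e1 : fval S u (A.erase y) = fval S u A := by
    by_contra h
    have := (hT.bound hS hb agy rτ hd' (Finset.notMem_erase y A)
      (by rw [← hyd, hAy]; exact h) (by omega)).1
    omega
  -- removing `y` changes nothing in presence of `x`
  have e2 : fval S u (insert x (A.erase y)) = fval S u (insert x A) := by
    by_contra h
    have h2 := (hT.bound hS hb agxy rτ hd' hyxy (by rw [← hyd, hins]; exact h) (by omega)).2
    rw [← hm, tl_append, tl_append] at h2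
    simp [tl, hr] at h2
    omega
  have := (hT.bound hS hb agy hβ hd hxy' (by rw [← hxd, e1, e2]; exact hne) (by omega)).1
  omega

/-- After twins, the predicate terms of relevant predicates coincide. Take a lexicographically
minimal counterexample `β` and transport its couple, keeping the relevant part of the
interpretation, to the other head `G'`. It meets the same predicate term of `q` after a word `γ`
for which the twins differ as well. The words `β` and `γ` cannot part at a predicate, by
`Twin.clean` for a relevant one and by the choice of the irrelevant part for another; `γ` is not
shorter than `β` by minimality; and if `γ` extends `β`, then the path meets `q` twice without a
true decision in between. -/
theorem Twin.args_eq {S u G G' K} (hS : Special S) (hT : Twin S u G G' K) {q β l a Z K'}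
    (hq : Rel S u q) (hβ : Run K (β ++ [.prd q l a Z]) K') :
    a.map (ex eSt (G ++ β)) = a.map (ex eSt (G' ++ β)) := by
  by_contra hd
  obtain ⟨ρt, ρf, ht⟩ := hq.exists_tails hS
  obtain ⟨q, β, ρt, ρf, ⟨ht, l, a, Z, K', hβ, hd⟩, hb⟩ :=
    exists_confBound (⟨ht, l, a, Z, K', hβ, hd⟩ : Conf S u G G' K q β ρt ρf)
  have hq := ht.rel hS
  have htl := hT.tl_eq hS
  set N := tl (Rel S u) β + tc S u ρt ρf with hN
  have rβ : Run [S] (G ++ β ++ [.prd q l a Z]) K' := by simpa using hT.run.trans hβ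
  obtain ⟨A, hx, e0, -, hne, hcA⟩ := tails_couple hS ht rβ
  rw [tl_append] at hcA
  have aA : agr A (G ++ β) := by
    have := (runOf_spec hS A).2
    rw [e0] at this
    exact this.left
  obtain ⟨Kβ, hβ'⟩ := hβ.prefix
  have rβ' : Run [S] (G' ++ β) Kβ := hT.run'.trans hβ'
  obtain ⟨hxJ, hneJ⟩ := couple_mix (tset eSt (G' ++ β)) hq hx hne
  set s := a.map (ex eSt (G ++ β)) with hs
  set J := mix S u A (tset eSt (G' ++ β)) with hJ
  have aJ : agr J G' := by
    intro k b hk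
    by_cases hR : Rel S u k.1
    · rw [hJ, mem_mix_rel hR]
      exact aA.left k b ((hT.dec_iff _ _ hR).2 hk)
    · rw [hJ, mem_mix_not_rel hR]
      exact (agr_tset hS rβ').left k b hk
  obtain ⟨H, l', a', ρt', ρf', f0, -, hs', ht', hcJ⟩ := couple_tails hS hxJ hneJ
  rw [hJ, rpart_mix] at hcJ
  obtain ⟨r0, aJ'⟩ := runOf_spec hS J
  have hG := prefix_runOf hS hT.run' aJ
  rw [f0] at r0 hG aJ'
  obtain ⟨rfl, rfl⟩ := r0.same_prd hS rβ
  obtain ⟨γ, rfl⟩ : G' <+: H := by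
    refine prefix_of_snoc_prefix hG (c := .prd q l' a' false) ⟨ρf', by simp⟩ fun hp => ?_
    have := mem_dec_of_prefix (d := eSt) hp
    rw [hs'] at this
    have := (hT.dec_iff (q, s) _ hq).2 this
    exact dec_disj_last hS rβ (by rw [dec_append]; exact List.mem_append_left _ this)
  have rγ : Run [S] (G' ++ (γ ++ [.prd q l' a' false] ++ ρf')) [] := by simpa using r0
  obtain ⟨_, rγ⟩ := (hT.run'.residual rγ).prefix
  obtain ⟨Kγ, rγ'⟩ := rγ.prefix
  have hdγ : a'.map (ex eSt (G ++ γ)) ≠ a'.map (ex eSt (G' ++ γ)) := by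
    intro e
    obtain ⟨_, h2⟩ := rβ.prefix
    have := exchange_map hS (hT.run.trans rγ') h2 (a := a') (a' := a')
      (by rw [← ex_append, ← ex_append, e, hs']) (ex eSt G')
    rw [← ex_append, ← ex_append] at this
    exact hd (by rw [← this, hs'])
  obtain ⟨b1, b2⟩ := hb q γ ρt' ρf' ⟨ht', _, _, _, _, rγ, hdγ⟩
  obtain ⟨b3, -⟩ := hb q γ ρt ρf ⟨ht, _, _, _, _, rγ, hdγ⟩
  obtain ⟨b5, -⟩ := hb q β ρt' ρf' ⟨ht', _, _, _, _, hβ, hd⟩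
  rw [tl_append] at hcJ
  have hNγ : tl (Rel S u) γ + tc S u ρt' ρf' = N := by omega
  have htγ : tl (Rel S u) γ = tl (Rel S u) β := by omega
  have hlen : β.length ≤ γ.length := (b2 hNγ).2 htγ
  have hb' : ConfBound S u G' G K N (tl (Rel S u) β) β.length :=
    fun r β ρt ρf h => hb r β ρt ρf h.symm
  have hcJ' : (rpart (Rel S u) J).card ≤ tl (Rel S u) G' + N := by rw [hJ, rpart_mix]; omega
  rcases hβ'.diverge rγ' with ⟨δ, rfl⟩ | h | ⟨τ, r, m, c, b, h1, h2⟩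
  · -- `γ` extends `β`: the rest is a loop without true decisions
    have tδ : tl (Rel S u) δ = 0 := by rw [tl_append] at htγ; omega
    rcases δ with _ | ⟨c, δ⟩
    · rw [List.append_nil] at hs'
      exact hd hs'.symm
    have hc : c = .prd q l' a' false := by
      obtain ⟨K₁, K₁', g1, g2, g3⟩ := rγ.at_letter (w₁ := β) (c := c)
        (w₂ := δ ++ [.prd q l' a' false]) (by simp)
      rcases hβ.diverge (g1.trans g2.run) with h | h | ⟨τ, r, m, c', b, h1, h2⟩
      · have h' := h.eq_of_length (by simp)
        have h' := List.append_cancel_left h'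
        simp only [List.cons.injEq, and_true] at h'
        subst h'
        cases Z
        · rfl
        · simp [tl, hq] at tδ
      · have h' := h.eq_of_length (by simp)
        have h' := List.append_cancel_left h'
        simp only [List.cons.injEq, and_true] at h'
        subst h'
        cases Z
        · rfl
        · simp [tl, hq] at tδ
      · rcases List.prefix_concat_iff.1 h1 with h | h
        · obtain ⟨rfl, hh⟩ := List.append_inj' h (by simp)
          rcases List.prefix_concat_iff.1 h2 with h' | h'
          · have h' := List.append_cancel_left h'
            simp only [List.cons.injEq, and_true, Letter.prd.injEq] at hh h'
            obtain ⟨rfl, rfl, rfl, rfl⟩ := hh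
            subst h'
            cases b
            · simp [tl, hq] at tδ
            · rfl
          · have := h'.length_le
            simp at this
        · rcases List.prefix_concat_iff.1 h2 with h' | h'
          · have e1 := h.length_le
            have e2 := congrArg List.length h'
            simp at e1 e2
            omega
          · have := (List.prefix_of_prefix_length_le h h' (by simp)).eq_of_length (by simp)
            simp at this
    subst hc
    have fδ : AllF (.prd q l' a' false :: δ) := by
      refine allF_of_mix hS (by simpa using hT.run'.trans rγ' :
        Run [S] (G' ++ β ++ .prd q l' a' false :: δ) Kγ) (A := A) (u := u) ?_ tδ
      have := aJ'.left
      rw [hJ] at this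
      simpa using this
    have := hT.run'.trans rγ
    refine no_loop hS (H := G' ++ β) (δ := δ) (q := q) (l := l') (a := a') (Z := false)
      (by simpa using this) ?_
    exact fun p l a h => fδ p l a (List.mem_cons_of_mem _ h)
  · have := h.eq_of_length_le hlen
    subst this
    exact hd hs'.symm
  · by_cases hR : Rel S u r
    · have hcl : c.map (ex eSt (G ++ τ)) = c.map (ex eSt (G' ++ τ)) := by
        cases b
        · refine (hT.symm.clean hS hb' hq aJ'.left rγ hdγ.symm ?_ ?_ hcJ' htγ hR h2).symm
          · rw [hs']; exact hxJ
          · rw [hs']; exact hneJ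
        · exact hT.clean hS hb hq aA hβ hd hx hne (by omega) rfl hR h1
      have k1 := aA.prd (τ := G ++ τ) (by simpa using (List.prefix_append_right_inj G).2 h1)
      have k2 := aJ'.left.prd (τ := G' ++ τ)
        (by simpa using (List.prefix_append_right_inj G').2 h2)
      rw [hJ, mem_mix_rel hR, ← hcl, ← k1] at k2
      cases b <;> simp at k2
    · have k1 := (agr_tset hS rβ').prd (τ := G' ++ τ)
        (by simpa using (List.prefix_append_right_inj G').2 h1)
      have k2 := aJ'.left.prd (τ := G' ++ τ)
        (by simpa using (List.prefix_append_right_inj G').2 h2)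
      rw [hJ, mem_mix_not_rel hR, ← k1] at k2
      cases b <;> simp at k2

/-- After twins, the final values of `u` coincide. -/
theorem Twin.value_eq {S u G G' K} (hS : Special S) (hT : Twin S u G G' K) {β}
    (hβ : Run K β []) : ex eSt (G ++ β) u = ex eSt (G' ++ β) u := by
  have h1 := hT.run.trans hβ
  have h0 := hT.run'.trans hβ
  have hf : ∀ {w}, Run [S] w [] → fval S u (tset eSt w) = ex eSt w u := fun h => by
    rw [fval, runOf_eq hS h (agr_tset hS h)]
  rw [← hf h1, ← hf h0]
  refine fval_congr ?_
  rw [tset_append, tset_append, rpart_union, rpart_union, hT.rpart_eq]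
  congr 1
  ext k
  simp only [mem_rpart, mem_tset]
  have key : ∀ {G G'}, Twin S u G G' K → (k, true) ∈ dec (ex eSt G) β → Rel S u k.1 →
      (k, true) ∈ dec (ex eSt G') β := by
    intro G G' hT hk hR
    obtain ⟨τ, p, l, a, b, τ', rfl, e⟩ := mem_dec.1 hk
    obtain ⟨rfl, rfl⟩ := Prod.mk.inj e
    have hβ' : Run K ((τ ++ [.prd p l a true]) ++ τ') [] := by simpa using hβ
    obtain ⟨_, hβ'⟩ := hβ'.prefix
    have := hT.args_eq hS hR hβ'
    rw [ex_append, ex_append] at this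
    rw [this]
    simp [dec_append, dec]
  exact ⟨fun h => ⟨key hT h.1 h.2, h.2⟩, fun h => ⟨key hT.symm h.1 h.2, h.2⟩⟩

end SchemaSlicing

namespace SchemaSlicing

/-! ### Assignments that influence the final value or a relevant predicate -/

/-- `Aims S u K β z`: from the continuation `K`, the word `β` leads either to the end of the
schema or to a relevant needed predicate, and the initial value of `z` enters the final value of
`u`, respectively an argument of that predicate. -/
def Aims (S : Schema) (u : ℕ) (K : List Schema) (β : List Letter) (z : ℕ) : Prop :=
  (Run K β [] ∧ VIn z (ex eSt β u)) ∨
  ∃ q m a Z K', Rel S u q ∧ Need S (.var u) (.pr q m) ∧ Run K (β ++ [.prd q m a Z]) K' ∧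
    ∃ w ∈ a, VIn z (ex eSt β w)

/-- The value produced by the labelled assignment `f^(l)` can reach the final value of `u` or an
argument of a relevant needed predicate. -/
def Live (S : Schema) (u f l : ℕ) : Prop :=
  ∃ τ y a K β, Run [S] τ (.assign y f l a :: K) ∧ Aims S u K β y

theorem Aims.cons {S u K K' α β y z} (h : Aims S u K' β z) (hα : Run K α K')
    (hy : VIn y (ex eSt α z)) : Aims S u K (α ++ β) y := by
  rcases h with ⟨h1, h2⟩ | ⟨q, m, a, Z, K₂, hq, hn, h1, w, hw, h2⟩
  · exact .inl ⟨hα.trans h1, (vIn_append _ _ _).2 ⟨z, h2, hy⟩⟩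
  · exact .inr ⟨q, m, a, Z, K₂, hq, hn, by simpa using hα.trans h1, w, hw,
      (vIn_append _ _ _).2 ⟨z, h2, hy⟩⟩

/-- Twins give the same value to every variable that still matters. -/
theorem Twin.eq_of_aims {S u G G' K β z} (hS : Special S) (hT : Twin S u G G' K)
    (h : Aims S u K β z) : ex eSt G z = ex eSt G' z := by
  rcases h with ⟨h1, h2⟩ | ⟨q, m, a, Z, K₂, hq, -, h1, w, hw, h2⟩
  · have := hT.value_eq hS h1
    rw [ex_append, ex_append] at this
    exact eq_of_ex_eq β u h2 this
  · have := hT.args_eq hS hq h1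
    rw [ex_append, ex_append, List.map_inj_left] at this
    exact eq_of_ex_eq β w h2 (this w hw)

/-- If no predicate of the upper part `M` of a continuation is relevant, then the word leaves
`M` before it reaches its target. -/
theorem Aims.leave {S u M K β y} (hM : ∀ q l a Z, Letter.prd q l a Z ∈ lettL M → ¬ Rel S u q)
    (h : Aims S u (M ++ K) β y) :
    ∃ α β' z, Run (M ++ K) α K ∧ (∀ c ∈ α, c ∈ lettL M) ∧ VIn y (ex eSt α z) ∧
      Aims S u K β' z := by
  rcases h with ⟨h1, h2⟩ | ⟨q, m, a, Z, K₂, hq, hn, h1, w, hw, h2⟩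
  · rcases h1.split_cont rfl with ⟨w₁, w₂, rfl, r1, r2, hl⟩ | ⟨N, hN, -, hl⟩
    · obtain ⟨z, hz, hy⟩ := (vIn_append _ _ _).1 h2
      exact ⟨w₁, w₂, z, r1, hl, hy, .inl ⟨r2, hz⟩⟩
    · obtain ⟨rfl, rfl⟩ := List.append_eq_nil_iff.1 hN.symm
      exact ⟨β, [], u, h1, hl, h2, .inl ⟨.nil _, vIn_var.2 rfl⟩⟩
  · rcases h1.split_cont rfl with ⟨w₁, w₂, e, r1, r2, hl⟩ | ⟨N, hN, -, hl⟩
    · rcases w₂.eq_nil_or_concat with rfl | ⟨w₂, c, rfl⟩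
      · exact absurd hq (hM _ m a Z (hl _ (by rw [List.append_nil] at e; rw [← e]; simp)))
      · rw [List.concat_eq_append, ← List.append_assoc] at e
        obtain ⟨rfl, e⟩ := List.append_inj' e (by simp)
        obtain rfl : Letter.prd q m a Z = c := by simpa using e
        obtain ⟨z, hz, hy⟩ := (vIn_append _ _ _).1 h2
        exact ⟨w₁, w₂, z, r1, hl, hy,
          .inr ⟨q, m, a, Z, K₂, hq, hn, by simpa using r2, w, hw, hz⟩⟩
    · exact absurd hq (hM _ m a Z (hl _ (by simp)))

/-- An occurrence inside `T` is reached without leaving `T`. -/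
theorem Site.reach_lett {T K P L} (h : Site T K P L) :
    ∃ w, Run (T :: K) w (P :: L) ∧ ∀ c ∈ w, c ∈ lett T := by
  induction h with
  | refl => exact ⟨[], .nil _, by simp⟩
  | @seqL a b K P L _ ih =>
    obtain ⟨w, h, hl⟩ := ih
    exact ⟨w, (Run.step (.seq a b K) h :), fun c hc => .inl (hl c hc)⟩
  | @seqR a b K P L _ ih =>
    obtain ⟨w, h, hl⟩ := ih
    obtain ⟨w', h', -, hl'⟩ := exists_allF a (b :: K)
    refine ⟨w' ++ w, (Run.step (.seq a b K) (h'.trans h) :), fun c hc => ?_⟩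
    rcases List.mem_append.1 hc with hc | hc
    · exact .inl (hl' c hc)
    · exact .inr (hl c hc)
  | @iteT p l a t e K P L _ ih =>
    obtain ⟨w, h, hl⟩ := ih
    refine ⟨_, .step (.iteT p l a t e K) h, fun c hc => ?_⟩
    rcases List.mem_cons.1 hc with rfl | hc
    · exact .inl ⟨_, rfl⟩
    · exact .inr (.inl (hl c hc))
  | @iteF p l a t e K P L _ ih =>
    obtain ⟨w, h, hl⟩ := ih
    refine ⟨_, .step (.iteF p l a t e K) h, fun c hc => ?_⟩
    rcases List.mem_cons.1 hc with rfl | hc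
    · exact .inl ⟨_, rfl⟩
    · exact .inr (.inr (hl c hc))
  | @whB p l a B K P L _ ih =>
    obtain ⟨w, h, hl⟩ := ih
    refine ⟨_, .step (.whT p l a B K) h, fun c hc => ?_⟩
    rcases List.mem_cons.1 hc with rfl | hc
    · exact .inl ⟨_, rfl⟩
    · exact .inr (hl c hc)

/-- A live assignment inside a part `T` without relevant predicates gives a path through `T`
which assigns to a variable that matters afterwards. -/
theorem Live.through {S : Schema} (hS : Special S) {u f l T K μ} (h : Live S u f l)
    (hμ : Run [S] μ (T :: K)) (hf : .fn f l ∈ lsymSet T)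
    (hR : ∀ {r l}, .pr r l ∈ lsymSet T → ¬ Rel S u r) :
    ∃ α z β, Run (T :: K) α K ∧ (∀ c ∈ α, c ∈ lett T) ∧ (∃ g m b, Letter.asn z g m b ∈ α) ∧
      Aims S u K β z := by
  obtain ⟨τ, y, a, K', β, hτ, hA⟩ := h
  obtain ⟨Q, M, hQ, hx⟩ := exists_site K hf
  obtain ⟨α₁, r1, hl1⟩ := hQ.reach_lett
  obtain ⟨rfl, rfl⟩ := Site.unique (hS.1 _) (hμ.trans r1).site_of_cons hτ.site_of_cons hx rfl
  obtain ⟨M₀, rfl, hM⟩ := hQ.bottom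
  have hMl : lettL M₀ ⊆ lett T := fun c hc => hM (by rw [lettL_cons]; exact .inr hc)
  obtain ⟨α₂, β', z, r2, hl2, hz, hA'⟩ := hA.leave fun q l a Z hq =>
    hR (lsymOf_mem_of_lett T (hMl hq))
  refine ⟨α₁ ++ .asn y f l a :: α₂, z, β', r1.trans (.step (.asn y f l a _) r2), ?_, ?_, hA'⟩
  · intro c hc
    rcases List.mem_append.1 hc with hc | hc
    · exact hl1 c hc
    · rcases List.mem_cons.1 hc with rfl | hc
      · exact hM (by rw [lettL_cons]; exact .inl rfl)
      · exact hMl (hl2 c hc)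
  · rcases last_assign α₂ z with ⟨w₁, g, m, b, w₂, rfl, -⟩ | ⟨-, e⟩
    · exact ⟨g, m, b, by simp⟩
    · rw [e] at hz
      obtain rfl := vIn_var.1 hz
      exact ⟨f, l, a, by simp⟩

/-- Words without relevant predicates after a common beginning give twins. -/
theorem Twin.mk_append {S u μ α α' K} (h : Run [S] (μ ++ α) K) (h' : Run [S] (μ ++ α') K)
    (hα : ∀ q l a Z, Letter.prd q l a Z ∈ α → ¬ Rel S u q)
    (hα' : ∀ q l a Z, Letter.prd q l a Z ∈ α' → ¬ Rel S u q) :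
    Twin S u (μ ++ α) (μ ++ α') K := by
  have key : ∀ {α d t b}, (∀ q l a Z, Letter.prd q l a Z ∈ α → ¬ Rel S u q) →
      Rel S u t.1 → (t, b) ∉ dec d α := by
    intro α d t b hα ht hm
    obtain ⟨τ, p, l, a, b', τ', rfl, e⟩ := mem_dec.1 hm
    obtain ⟨rfl, rfl⟩ := Prod.mk.inj e
    exact hα _ l a b (by simp) ht
  refine ⟨h, h', fun t b ht => ?_⟩
  simp [dec_append, key hα ht, key hα' ht]

/-- A predicate controlling a live assignment is relevant: otherwise the two ways of executing
the statement would be twins giving different values to a variable that matters. -/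
theorem Live.rel_of_controls {S : Schema} (hS : Special S) {u f l p m} (h : Live S u f l)
    (hc : ControlsL S p m (.fn f l)) : Rel S u p := by
  by_contra hp
  -- a value assigned after `μ` is not the value of any variable at `μ`
  have hfresh : ∀ {μ α K z} {x : ℕ}, Run [S] (μ ++ α) K → ∀ {w₁ g n b w₂},
      α = w₁ ++ Letter.asn z g n b :: w₂ →
      ex eSt μ x ≠ .app g (b.map (ex (ex eSt μ) w₁)) := by
    rintro μ α K z x r w₁ g n b w₂ rfl
    have r' : Run [S] ((μ ++ w₁ ++ [Letter.asn z g n b]) ++ w₂) K := by simpa using r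
    obtain ⟨_, r'⟩ := r'.prefix
    have := fresh_term hS r' (List.prefix_append μ w₁) x
    rwa [ex_append] at this
  -- the two parts `T`, `U` of an if-schema, entered from the continuation `N`
  have hif : ∀ {T U K N μ Z a}, Run [S] μ N → Step N [.prd p m a Z] (T :: K) →
      Step N [.prd p m a !Z] (U :: K) → (∀ {r l}, .pr r l ∈ lsymSet T → ¬ Rel S u r) →
      (∀ {r l}, .pr r l ∈ lsymSet U → ¬ Rel S u r) → .fn f l ∈ lsymSet T →
      (∀ g v, AssignsWith T g v → AssignsWith U g v → False) → False := by
    intro T U K N μ Z a hμ hT hU RT RU hf hd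
    obtain ⟨α, z, β, r, hl, ⟨g, n, b, hz⟩, hA⟩ := h.through hS (hμ.trans hT.run) hf RT
    obtain ⟨α', r', -, hl'⟩ := exists_allF U K
    have hTw : Twin S u (μ ++ .prd p m a Z :: α) (μ ++ .prd p m a (!Z) :: α') K := by
      refine .mk_append (hμ.trans (.step hT r)) (hμ.trans (.step hU r')) ?_ ?_
      · intro q l a Z hq
        rcases List.mem_cons.1 hq with e | hq
        · obtain ⟨rfl, -⟩ := Letter.prd.inj e; exact hp
        · exact RT (lsymOf_mem_of_lett T (hl _ hq))
      · intro q l a Z hq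
        rcases List.mem_cons.1 hq with e | hq
        · obtain ⟨rfl, -⟩ := Letter.prd.inj e; exact hp
        · exact RU (lsymOf_mem_of_lett U (hl' _ hq))
    have he := hTw.eq_of_aims hS hA
    rw [ex_append, ex_append, ex_prd, ex_prd] at he
    rcases last_assign α z with ⟨w₁, g, n, b, w₂, e, hv⟩ | ⟨hv, -⟩
    · rw [hv] at he
      rcases last_assign α' z with ⟨w₁', g', n', b', w₂', e', hv'⟩ | ⟨-, hv'⟩
      · rw [hv'] at he
        obtain ⟨rfl, -⟩ := Trm.app.inj he
        exact hd g z (assignsWith_of_lett T (hl (.asn z g n b) (by simp [e])))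
          (assignsWith_of_lett U (hl' (.asn z g n' b') (by simp [e'])))
      · rw [hv'] at he
        refine hfresh (hTw.run) (w₁ := .prd p m a Z :: w₁) (z := z) (n := n) (w₂ := w₂)
          (by rw [e]; rfl) ?_ (x := z) (b := b) (g := g)
        rw [ex_prd, he]
    · exact hv _ _ _ hz
  rcases hc with ⟨a, t, e, ho, hx⟩ | ⟨a, B, ho, hx⟩
  · obtain ⟨L, hs⟩ := ho.site []
    obtain ⟨μ, hμ⟩ := hs.reach
    obtain ⟨It, Ie⟩ := Idle.ite hS hμ hp
    have hd := hS.2.2.2.2 _ _ _ _ _ ho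
    rcases hx with hx | hx
    · exact hif (Z := true) hμ (.iteT _ _ _ _ _ _) (.iteF _ _ _ _ _ _) (It.not_rel hS t)
        (Ie.not_rel hS e) hx hd
    · exact hif (Z := false) hμ (.iteF _ _ _ _ _ _) (.iteT _ _ _ _ _ _) (Ie.not_rel hS e)
        (It.not_rel hS t) hx fun g v h1 h2 => hd g v h2 h1
  · obtain ⟨L, hs⟩ := ho.site []
    obtain ⟨μ, hμ⟩ := hs.reach
    have RB : ∀ {r l}, .pr r l ∈ lsymSet B → ¬ Rel S u r := (Idle.whil hμ hp).not_rel hS B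
    obtain ⟨α, z, β, r, hl, ⟨g, n, b, hz⟩, hA⟩ :=
      h.through hS (hμ.trans (Step.whT p m a B L).run) hx RB
    have hTw : Twin S u (μ ++ .prd p m a true :: α) (μ ++ []) (.whil p m a B :: L) := by
      refine .mk_append (hμ.trans (.step (.whT _ _ _ _ _) r)) (by simpa using hμ) ?_ (by simp)
      intro q l a Z hq
      rcases List.mem_cons.1 hq with e | hq
      · obtain ⟨rfl, -⟩ := Letter.prd.inj e; exact hp
      · exact RB (lsymOf_mem_of_lett B (hl _ hq))
    have he := hTw.eq_of_aims hS hA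
    rw [List.append_nil, ex_append, ex_prd] at he
    rcases last_assign α z with ⟨w₁, g, n, b, w₂, e, hv⟩ | ⟨hv, -⟩
    · rw [hv] at he
      refine hfresh (hTw.run) (w₁ := .prd p m a true :: w₁) (z := z) (n := n) (w₂ := w₂)
        (by rw [e]; rfl) ?_ (x := z) (b := b) (g := g)
      rw [ex_prd, he]
    · exact hv _ _ _ hz

/-- A predicate controlling a relevant predicate is relevant. -/
theorem Rel.of_controls {S : Schema} (hS : Special S) {u p m r l} (h : Rel S u r)
    (hc : ControlsL S p m (.pr r l)) : Rel S u p := by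
  by_contra hp
  rcases hc with ⟨a, t, e, ho, hx⟩ | ⟨a, B, ho, hx⟩
  · obtain ⟨L, hs⟩ := ho.site []
    obtain ⟨μ, hμ⟩ := hs.reach
    obtain ⟨It, Ie⟩ := Idle.ite hS hμ hp
    exact hx.elim (fun hx => It.not_rel hS t hx h) fun hx => Ie.not_rel hS e hx h
  · obtain ⟨L, hs⟩ := ho.site []
    obtain ⟨μ, hμ⟩ := hs.reach
    exact (Idle.whil hμ hp).not_rel hS B hx h

/-! ### Needed symbols are live or relevant -/

/-- The labelled value of `z` comes from the last assignment to `z`. -/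
theorem lexec_last {σ z f l ts} (h : lexec σ z = .app f l ts) :
    ∃ σ₁ a σ₂, σ = σ₁ ++ .asn z f l a :: σ₂ ∧ ex eSt σ₂ z = .var z ∧ ts = a.map (lexec σ₁) := by
  induction σ using List.reverseRecOn with
  | nil => simp [lexec] at h
  | append_singleton σ c ih =>
    have hc : lexec (σ ++ [c]) = lStep (lexec σ) c := by simp [lexec]
    rw [hc] at h
    cases c with
    | prd p m a b =>
      obtain ⟨σ₁, a', σ₂, rfl, h1, h2⟩ := ih h
      exact ⟨σ₁, a', σ₂ ++ [.prd p m a b], by simp, by simpa [ex_append] using h1, h2⟩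
    | asn y g m a =>
      by_cases hy : z = y
      · subst hy
        simp only [lStep, Function.update_self, LTrm.app.injEq] at h
        obtain ⟨rfl, rfl, rfl⟩ := h
        exact ⟨σ, a, [], rfl, rfl, rfl⟩
      · simp only [lStep, Function.update_of_ne hy] at h
        obtain ⟨σ₁, a', σ₂, rfl, h1, h2⟩ := ih h
        exact ⟨σ₁, a', σ₂ ++ [.asn y g m a], by simp, by
          simpa [ex_append, Function.update_of_ne hy] using h1, h2⟩

theorem isFLTrm_single {f l t} (h : IsFLTrm [(f, l)] t) : ∃ ts, t = .app f l ts := by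
  generalize hF : [(f, l)] = F at h
  cases h with
  | base f' l' ts => simp at hF; obtain ⟨rfl, rfl⟩ := hF; exact ⟨ts, rfl⟩
  | @step F t g m ts ht h =>
    have hF' : F = [] := by
      rcases F with _ | ⟨x, F⟩
      · rfl
      · simp at hF
    subst hF'
    generalize hF : ([] : List (ℕ × ℕ)) = F at h
    cases h <;> simp at hF

theorem isFLTrm_pair {f l g m t} (h : IsFLTrm [(f, l), (g, m)] t) :
    ∃ ts s, t = .app g m ts ∧ s ∈ ts ∧ IsFLTrm [(f, l)] s := by
  generalize hF : [(f, l), (g, m)] = F at h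
  cases h with
  | base f' l' ts => simp at hF
  | @step F t g' m' ts ht h =>
    have : [(f, l)] ++ [(g, m)] = F ++ [(g', m')] := hF
    obtain ⟨rfl, e⟩ := List.append_inj' this rfl
    simp at e
    obtain ⟨rfl, rfl⟩ := e
    exact ⟨ts, t, rfl, ht, h⟩

theorem Run.at_asn {K w K₂ w₁ y f l a w₂} (h : Run K w K₂) (e : w = w₁ ++ .asn y f l a :: w₂) :
    ∃ K', Run K w₁ (.assign y f l a :: K') ∧ Run K' w₂ K₂ := by
  obtain ⟨K₁, K', h1, h2, h3⟩ := h.at_letter e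
  cases h2
  exact ⟨K', h1, h3⟩

/-- Every needed function symbol is live and every needed predicate symbol is relevant. -/
theorem Need.live_or_rel {S : Schema} (hS : Special S) {u : ℕ} {x : LSym}
    (h : Need S (.var u) x) :
    (∀ f l, x = .fn f l → Live S u f l) ∧ ∀ p l, x = .pr p l → Rel S u p := by
  generalize hc : Crit.var u = c at h
  induction h with
  | @ofVar v f l hd =>
    obtain rfl := Crit.var.inj hc
    refine ⟨?_, by simp⟩
    rintro _ _ ⟨⟩
    obtain ⟨σ, ⟨A, hσ⟩, hl⟩ := hd
    obtain ⟨ts, ht⟩ := isFLTrm_single hl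
    obtain ⟨σ₁, a, σ₂, rfl, h1, -⟩ := lexec_last ht
    obtain ⟨K, r1, r2⟩ := (mem_paths_iff.1 hσ).at_asn (List.append_assoc A σ₁ _).symm
    exact ⟨_, _, _, _, _, r1, .inl ⟨r2, by rw [h1]; exact .here⟩⟩
  | ofOmega => simp at hc
  | @ofDep c f l x hn hd ih =>
    subst hc
    refine ⟨?_, by simp⟩
    rintro _ _ ⟨⟩
    cases x with
    | fn g m =>
      obtain ⟨τ, y, b, K, β, hτ, hA⟩ := (ih rfl).1 _ _ rfl
      obtain ⟨σ, ⟨A, B, hσ⟩, w, hl⟩ := hd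
      obtain ⟨ts, s, ht, hs, hl'⟩ := isFLTrm_pair hl
      obtain ⟨σ₁, b', σ₂, rfl, -, rfl⟩ := lexec_last ht
      obtain ⟨v, hv, rfl⟩ := List.mem_map.1 hs
      obtain ⟨ts', ht'⟩ := isFLTrm_single hl'
      obtain ⟨ρ₁, a, ρ₂, rfl, h1, -⟩ := lexec_last ht'
      obtain ⟨K₁, r1, r2⟩ := (mem_paths_iff.1 hσ).at_asn (w₁ := A ++ ρ₁) (y := v) (f := f)
        (l := l) (a := a) (w₂ := ρ₂ ++ .asn w g m b' :: (σ₂ ++ B)) (by simp)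
      obtain ⟨K₂, r3, -⟩ := r2.at_asn rfl
      obtain ⟨e, rfl⟩ := Site.unique (hS.1 (.fn g m))
        ((r1.trans (Step.asn _ _ _ _ _).run).trans r3).site_of_cons hτ.site_of_cons rfl rfl
      obtain ⟨rfl, -, -, rfl⟩ := Schema.assign.inj e
      refine ⟨_, _, _, _, _, r1, hA.cons (r3.trans (Step.asn _ _ _ _ _).run) ?_⟩
      rw [ex_append, ex_asn]
      simp only [ex_nil, Function.update_self]
      exact vIn_app.2 ⟨_, List.mem_map_of_mem hv, by rw [h1]; exact .here⟩
    | pr q m =>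
      have hq := (ih rfl).2 _ _ rfl
      obtain ⟨σ, a', Z, ⟨A, B, hσ⟩, w, hw, hl⟩ := hd
      obtain ⟨ts, ht⟩ := isFLTrm_single hl
      obtain ⟨σ₁, a, σ₂, rfl, h1, -⟩ := lexec_last ht
      obtain ⟨K, r1, r2⟩ := (mem_paths_iff.1 hσ).at_asn (w₁ := A ++ σ₁) (y := w) (f := f)
        (l := l) (a := a) (w₂ := (σ₂ ++ [.prd q m a' Z]) ++ B) (by simp)
      obtain ⟨K', r2⟩ := r2.prefix
      exact ⟨_, _, _, _, _, r1,
        .inr ⟨q, m, a', Z, K', hq, hn, r2, w, hw, by rw [h1]; exact .here⟩⟩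
  | @ofControl c p l x hn hd ih =>
    subst hc
    refine ⟨by simp, ?_⟩
    rintro _ _ ⟨⟩
    cases x with
    | fn g m => exact ((ih rfl).1 _ _ rfl).rel_of_controls hS hd
    | pr q m => exact ((ih rfl).2 _ _ rfl).of_controls hS hd

/-- A live function symbol occurs in a final value of `u` or in the vector term of a couple. -/
theorem Live.witness {S : Schema} (hS : Special S) {u f l : ℕ} (h : Live S u f l) :
    (∃ (i : HInterp) (σ : List Letter), TermRun S (herb i) eSt σ ∧ OccIn f (hexec σ u)) ∨
    (∃ (p m : ℕ) (ts : List Trm), Need S (Crit.var u) (LSym.pr p m) ∧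
      (∃ t ∈ ts, OccIn f t) ∧ ∃ i j : HInterp, PTUCouple S p ts u i j) := by
  obtain ⟨τ, y, a, K, β, hτ, hA⟩ := h
  have hr : Run [S] (τ ++ [.asn y f l a]) K := hτ.trans (Step.asn _ _ _ _ _).run
  have ho : OccIn f (ex eSt (τ ++ [.asn y f l a]) y) := by
    rw [ex_append, ex_asn]
    simp only [ex_nil, Function.update_self]
    exact .here _
  rcases hA with ⟨h1, h2⟩ | ⟨q, m, b, Z, K', hq, hn, h1, w, hw, h2⟩
  · left
    have h3 := mem_paths_iff.2 (hr.trans h1)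
    obtain ⟨i, hi⟩ := hS.2.2.1 _ (mem_prePaths_iff.2 ⟨_, hr.trans h1⟩)
    refine ⟨i, _, ⟨h3, hi⟩, ?_⟩
    rw [hexec_eq, ex_append]
    exact occIn_of_vIn ho β u h2
  · right
    obtain ⟨ρt, ρf, ht⟩ := hq.exists_tails hS
    have hH : Run [S] (((τ ++ [.asn y f l a]) ++ β) ++ [.prd q m b Z]) K' := by
      simpa using hr.trans h1
    obtain ⟨A, hx, -, -, hne, -⟩ := tails_couple hS ht hH
    have hrun : ∀ A, TermRun S (herb (intF A)) eSt (runOf S A) := fun A =>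
      ⟨mem_paths_iff.2 (runOf_spec hS A).1, agr_iff.1 (runOf_spec hS A).2⟩
    generalize hts : b.map (ex eSt ((τ ++ [.asn y f l a]) ++ β)) = ts at hx hne
    refine ⟨q, m, ts, hn, ⟨ex eSt ((τ ++ [.asn y f l a]) ++ β) w,
      hts ▸ List.mem_map_of_mem hw, ?_⟩, intF A, intF (insert (q, ts) A), ⟨?_, ?_⟩,
      runOf S A, runOf S (insert (q, ts) A), hrun _, hrun _, ?_⟩
    · rw [ex_append]
      exact occIn_of_vIn ho β w h2
    · simp [intF, hx]
    · intro p ss hp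
      simp [intF, hp]
    · rw [hexec_eq, hexec_eq]
      exact hne

end SchemaSlicing

namespace SchemaSlicing

/-- Theorem 26(2) / need.thm: for a special schema S, a variable
u, and any labelled function symbol `f^(l) ∈ Need_S(u)`, either some
terminating Herbrand run of S leaves a final value of u containing f, or there
is a predicate p with a labelled occurrence in `Need_S(u)` and a vector term
containing f admitting a p(t⃗)u-couple for S. -/
theorem need_function_witnessed (S : Schema) (hS : Special S) (u f l : ℕ)
    (h : Need S (Crit.var u) (LSym.fn f l)) :
    (∃ (i : HInterp) (σ : List Letter), TermRun S (herb i) eSt σ ∧ OccIn f (hexec σ u)) ∨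
    (∃ (p m : ℕ) (ts : List Trm), Need S (Crit.var u) (LSym.pr p m) ∧
      (∃ t ∈ ts, OccIn f t) ∧ ∃ i j : HInterp, PTUCouple S p ts u i j) := by
  exact (h.live_or_rel hS).1 f l rfl |>.witness hS

end SchemaSlicing
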